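/- (Triangle c) Let 0 ≤ α_1 ≤ 1/2 and 0 ≤ α_2, α_3 < 1/2 with α_1 + α_2 + α_3 = 1. For each i = 1,2,3 let E_i ⊆ [0,∞) be measurable of finite measure and let j be an index with |E_j| maximal. Then there exists a major subset E_j' ⊆ E_j (i.e., |E_j'| ≥ |E_j|/2), depending on E_1, E_2, E_3, such that for all measurable f_i with |f_i| ≤ 1_{E_i} for i ≠ j and |f_j| ≤ 1_{E_j'}, one has |Λ_L(f_1, f_2, f_3)| ≤ C |E_1|^{α_1} |E_2|^{α_2} |E_3|^{α_3} with C depending only on α_1, α_2, α_3 and independent of L. Moreover, if the measures |E_1|, |E_2|, |E_3| lie within a factor of four of each other, one may take E_j' = E_j. -/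

import Mathlib

open MeasureTheory Set ENNReal NNReal

noncomputable section

namespace Quartile

/-- The Walsh functions on `[0,1)` (extended by zero), in Walsh-Paley order,
defined by the recursion `W_{2l} = W_l(2x) + W_l(2x-1)`, `W_{2l+1} = W_l(2x) - W_l(2x-1)`. -/
def walsh (n : ℕ) (x : ℝ) : ℝ :=
  if h : n = 0 then (if 0 ≤ x ∧ x < 1 then 1 else 0)
  else if n % 2 = 0 then walsh (n / 2) (2 * x) + walsh (n / 2) (2 * x - 1)
  else walsh (n / 2) (2 * x) - walsh (n / 2) (2 * x - 1)
termination_by n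
decreasing_by
  all_goals exact Nat.div_lt_self (Nat.pos_of_ne_zero h) one_lt_two

/-- The dyadic interval `[2^k n, 2^k (n+1)) ⊆ [0,∞)`. -/
def dyadicI (k : ℤ) (n : ℕ) : Set ℝ := Ico ((2:ℝ)^k * n) ((2:ℝ)^k * (n+1))

/-- A tile: the dyadic rectangle `[2^k n, 2^k(n+1)) × [2^{-k} l, 2^{-k}(l+1))` of area one. -/
structure Tile where
  k : ℤ
  n : ℕ
  l : ℕ

namespace Tile

/-- The time interval `I_p` of a tile. -/
def timeI (p : Tile) : Set ℝ := Ico ((2:ℝ)^p.k * p.n) ((2:ℝ)^p.k * (p.n+1))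

/-- The frequency interval `ω_p` of a tile. -/
def freqI (p : Tile) : Set ℝ := Ico ((2:ℝ)^(-p.k) * p.l) ((2:ℝ)^(-p.k) * (p.l+1))

/-- The tile as a subset of the phase plane. -/
def toSet (p : Tile) : Set (ℝ × ℝ) := p.timeI ×ˢ p.freqI

/-- The Walsh wave packet `w_p` of a tile, `L²`-normalized. -/
def wp (p : Tile) (x : ℝ) : ℝ :=
  Real.sqrt ((2:ℝ)^(-p.k)) * walsh p.l ((2:ℝ)^(-p.k) * x - p.n)

end Tile

/-- The order on dyadic rectangles: `p ≤ q` iff `I_p ⊆ I_q` and `ω_q ⊆ ω_p`, for tiles. -/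
def tileLE (p q : Tile) : Prop := p.timeI ⊆ q.timeI ∧ q.freqI ⊆ p.freqI

/-- The inner product `⟨f, w_p⟩` of a function with a (real valued) wave packet. -/
def coef (f : ℝ → ℂ) (p : Tile) : ℂ := ∫ x, f x * (p.wp x : ℂ)

/-- The rank one projection `Π_p f = ⟨f, w_p⟩ w_p` associated to a single tile. -/
def projT (p : Tile) (f : ℝ → ℂ) (x : ℝ) : ℂ := coef f p * (p.wp x : ℂ)

/-- The projection associated to a collection of (pairwise disjoint) tiles. -/
def projSet (𝔭 : Set Tile) (f : ℝ → ℂ) (x : ℝ) : ℂ := ∑' p : 𝔭, projT p f x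

/-- The maximal tiles contained in a subset `S` of the phase plane; when `S` is a disjoint
union of tiles (of the kind appearing below) these form the canonical tiling of `S`. -/
def maxTiles (S : Set (ℝ × ℝ)) : Set Tile :=
  {p | p.toSet ⊆ S ∧ ∀ q : Tile, q.toSet ⊆ S → tileLE p q → q = p}

/-- The phase plane projection `Π_S` associated to a subset `S` of the phase plane,
computed with the canonical tiling of `S` by maximal tiles (the projection is independent
of the chosen tiling). -/
def piProj (S : Set (ℝ × ℝ)) (f : ℝ → ℂ) (x : ℝ) : ℂ := projSet (maxTiles S) f x

/-- A bitile: the dyadic rectangle `[2^k n, 2^k(n+1)) × [2^{1-k} l, 2^{1-k}(l+1))` of area two. -/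
structure Bitile where
  k : ℤ
  n : ℕ
  l : ℕ

namespace Bitile

/-- The time interval `I_P` of a bitile. -/
def timeI (P : Bitile) : Set ℝ := Ico ((2:ℝ)^P.k * P.n) ((2:ℝ)^P.k * (P.n+1))

/-- The frequency interval `ω_P` of a bitile. -/
def freqI (P : Bitile) : Set ℝ := Ico ((2:ℝ)^(1-P.k) * P.l) ((2:ℝ)^(1-P.k) * (P.l+1))

/-- The bitile as a subset of the phase plane. -/
def toSet (P : Bitile) : Set (ℝ × ℝ) := P.timeI ×ˢ P.freqI

/-- The lower tile `P_d` of a bitile. -/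
def d (P : Bitile) : Tile := ⟨P.k, P.n, 2*P.l⟩

/-- The upper tile `P_u` of a bitile. -/
def u (P : Bitile) : Tile := ⟨P.k, P.n, 2*P.l+1⟩

/-- The left tile of a bitile. -/
def left (P : Bitile) : Tile := ⟨P.k-1, 2*P.n, P.l⟩

/-- The right tile of a bitile. -/
def right (P : Bitile) : Tile := ⟨P.k-1, 2*P.n+1, P.l⟩

/-- The `L^∞`-normalized wave packet `φ_{P_d} = |I_P|^{1/2} w_{P_d}`. -/
def phid (P : Bitile) (x : ℝ) : ℝ := Real.sqrt ((2:ℝ)^P.k) * P.d.wp x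

end Bitile

/-- The order on dyadic rectangles, for bitiles. -/
def bitileLE (P Q : Bitile) : Prop := P.timeI ⊆ Q.timeI ∧ Q.freqI ⊆ P.freqI

/-- Strict order on bitiles. -/
def bitileLT (P Q : Bitile) : Prop := bitileLE P Q ∧ P ≠ Q

/-- A collection of bitiles is convex if together with `P₁ < P < P₂` for `P₁, P₂` in the
collection it contains `P`. -/
def IsConvex (PP : Set Bitile) : Prop :=
  ∀ P1 P2 P : Bitile, P1 ∈ PP → P2 ∈ PP → bitileLT P1 P → bitileLT P P2 → P ∈ PP

/-- A tree: a collection of bitiles with a (unique) maximal element `P_T = I_T × ω_T`. -/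
structure Tree where
  carrier : Set Bitile
  top : Bitile
  top_mem : top ∈ carrier
  le_top : ∀ P ∈ carrier, bitileLE P top

namespace Tree

/-- `T_d`: those bitiles of the tree whose lower tile frequency interval contains `ω_T`
(in the paper's notation, `P_T ≤ P_d`). -/
def Td (T : Tree) : Set Bitile := {P | P ∈ T.carrier ∧ T.top.freqI ⊆ P.d.freqI}

/-- `T_u`: those bitiles of the tree whose upper tile frequency interval contains `ω_T`
(in the paper's notation, `P_T ≤ P_u`). -/
def Tu (T : Tree) : Set Bitile := {P | P ∈ T.carrier ∧ T.top.freqI ⊆ P.u.freqI}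

/-- The region `⋃_{P ∈ T} P` of the phase plane occupied by a tree. -/
def unionSet (T : Tree) : Set (ℝ × ℝ) := ⋃ P ∈ T.carrier, P.toSet

/-- The phase plane projection `Π_T` of a (convex) tree. -/
def proj (T : Tree) (f : ℝ → ℂ) : ℝ → ℂ := piProj T.unionSet f

end Tree

/-- The vertical dilation `2^L S` of a subset of the phase plane. -/
def dilate (L : ℕ) (S : Set (ℝ × ℝ)) : Set (ℝ × ℝ) := (fun q => (q.1, (2:ℝ)^L * q.2)) '' S

/-- The enlarged tree `T^{(L)}` with respect to a frequency `ξ ∈ ω_T`: all bitiles `P` with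
`2^L ξ ∈ ω_P` contained in a rectangle `2^L P'` with `P' ∈ T`. -/
def Tree.enlarged (L : ℕ) (T : Tree) (ξ : ℝ) : Set Bitile :=
  {P | (2:ℝ)^L * ξ ∈ P.freqI ∧ ∃ P' ∈ T.carrier, P.toSet ⊆ dilate L P'.toSet}

/-- The region of the phase plane occupied by the enlarged tree `T^{(L)}`. -/
def Tree.enlargedSet (L : ℕ) (T : Tree) (ξ : ℝ) : Set (ℝ × ℝ) :=
  ⋃ P ∈ T.enlarged L ξ, P.toSet

/-- The left endpoint of `ω_T`, a canonical choice of `ξ ∈ ω_T`. -/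
def Tree.xiTop (T : Tree) : ℝ := (2:ℝ)^(1-T.top.k) * T.top.l

/-- The phase plane projection `Π_{T^{(L)}}` of the enlarged tree (independent of the
choice of `ξ ∈ ω_T`; we use the canonical choice).  For `L = 0` this is `Π_T`. -/
def Tree.projL (L : ℕ) (T : Tree) (f : ℝ → ℂ) : ℝ → ℂ := piProj (T.enlargedSet L T.xiTop) f

/-- `size^{(L)}(PP, f) = sup |I_T|^{-1/2} ‖Π_{T^{(L)}} f‖₂`, the supremum over convex trees
`T ⊆ PP`.  For `L = 0` this is the plain `size(PP, f)`. -/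
def size (L : ℕ) (PP : Set Bitile) (f : ℝ → ℂ) : ℝ≥0∞ :=
  ⨆ (T : Tree) (_ : T.carrier ⊆ PP ∧ IsConvex T.carrier),
    (ENNReal.ofReal (Real.sqrt ((2:ℝ)^T.top.k)))⁻¹ * eLpNorm (T.projL L f) 2 volume

/-- The quartile form `Λ_{PP}` restricted to a collection `PP` of bitiles. -/
def quartileFormOn (L : ℕ) (PP : Set Bitile) (f1 f2 f3 : ℝ → ℂ) : ℂ :=
  ∫ x, ∑' P : PP, (P.1.phid x : ℂ) * projT P.1.u f1 x *
      piProj (dilate L P.1.d.toSet) f2 x * piProj (dilate L P.1.d.toSet) f3 x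

/-- The bitiles contained in the strip `ℝ₊ × [0, 2^N)`. -/
def stripBitiles (N : ℕ) : Set Bitile := {P | P.freqI ⊆ Ico (0:ℝ) ((2:ℝ)^N)}

/-- The quartile form `Λ_L` (with frequency truncation parameter `N`). -/
def quartileForm (L N : ℕ) (f1 f2 f3 : ℝ → ℂ) : ℂ :=
  quartileFormOn L (stripBitiles N) f1 f2 f3

/-- The quartile form perturbed by a bounded sequence of coefficients `c_P`. -/
def quartileFormC (L N : ℕ) (c : Bitile → ℂ) (f1 f2 f3 : ℝ → ℂ) : ℂ :=
  ∫ x, ∑' P : stripBitiles N, c P.1 * (P.1.phid x : ℂ) * projT P.1.u f1 x *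
      piProj (dilate L P.1.d.toSet) f2 x * piProj (dilate L P.1.d.toSet) f3 x

/-- The counting function `Σ_{T ∈ 𝕋} 1_{I_T}` of a collection of trees. -/
def countingFn (𝕋 : Set Tree) (x : ℝ) : ℝ≥0∞ :=
  ∑' T : 𝕋, (T.1.top.timeI).indicator (fun _ => (1:ℝ≥0∞)) x

/-- The average of an `ℝ≥0∞`-valued function over a set. -/
def avgOn (I : Set ℝ) (g : ℝ → ℝ≥0∞) : ℝ≥0∞ := (volume I)⁻¹ * ∫⁻ x in I, g x

/-- The dyadic BMO norm on `[0,∞)` of an `ℝ≥0∞`-valued function. -/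
def dyadicBMO (g : ℝ → ℝ≥0∞) : ℝ≥0∞ :=
  ⨆ (k : ℤ) (n : ℕ), avgOn (dyadicI k n)
    (fun x => (g x - avgOn (dyadicI k n) g) + (avgOn (dyadicI k n) g - g x))

/-- The dyadic Hardy-Littlewood maximal function on `[0,∞)`. -/
def dyadicMax (f : ℝ → ℂ) (x : ℝ) : ℝ≥0∞ :=
  ⨆ (k : ℤ) (n : ℕ) (_ : x ∈ dyadicI k n),
    (volume (dyadicI k n))⁻¹ * ∫⁻ y in dyadicI k n, ‖f y‖₊

/-- The dyadic interval of length `2^j` containing `y ≥ 0`. -/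
def freqInterval (j : ℤ) (y : ℝ) : Set ℝ :=
  Ico ((2:ℝ)^j * ⌊y / (2:ℝ)^j⌋) ((2:ℝ)^j * (⌊y / (2:ℝ)^j⌋ + 1))

/-- The projection `Π_l := Π_{I_T × ω_l}`, where `ω_l` is the dyadic interval of
length `2^l` containing the frequency `y`. -/
def PiScale (T : Tree) (j : ℤ) (y : ℝ) (f : ℝ → ℂ) : ℝ → ℂ :=
  piProj (T.top.timeI ×ˢ freqInterval j y) f

/-- The difference projection `Π_l^Δ = Π_l - Π_{l-1}`. -/
def PiDelta (T : Tree) (j : ℤ) (y : ℝ) (f : ℝ → ℂ) (x : ℝ) : ℂ :=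
  PiScale T j y f x - PiScale T (j-1) y f x

section

/-- tile order in integer coordinates -/
def tl (p q : Tile) : Prop := ∃ d : ℕ, q.k = p.k + d ∧ p.n / 2 ^ d = q.n ∧ q.l / 2 ^ d = p.l

/-- bitile order in integer coordinates -/
def bl (p q : Bitile) : Prop := ∃ d : ℕ, q.k = p.k + d ∧ p.n / 2 ^ d = q.n ∧ q.l / 2 ^ d = p.l

/-- `P` lies strictly below `P0`, and the frequency interval of `P0` is in the `b`-th half of `P`. -/
def sub (b : ℕ) (P P0 : Bitile) : Prop :=
  ∃ d : ℕ, P0.k = P.k + d + 1 ∧ P.n / 2 ^ (d + 1) = P0.n ∧ P0.l / 2 ^ d = 2 * P.l + b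

/-- half tiles of a bitile -/
def Bitile.h (b : ℕ) (P : Bitile) : Tile := ⟨P.k, P.n, 2 * P.l + b⟩

theorem bl_refl (P : Bitile) : bl P P := ⟨0, by simp⟩

theorem bl_trans {P Q R : Bitile} (h : bl P Q) (h' : bl Q R) : bl P R := by
  obtain ⟨d, h1, h2, h3⟩ := h
  obtain ⟨e, g1, g2, g3⟩ := h'
  refine ⟨d + e, by rw [g1, h1]; push_cast; ring, ?_, ?_⟩
  · rw [pow_add, ← Nat.div_div_eq_div_mul, h2, g2]
  · rw [add_comm, pow_add, ← Nat.div_div_eq_div_mul, g3, h3]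

theorem sub_bl {b : ℕ} (hb : b < 2) {P P0 : Bitile} (h : sub b P P0) : bl P P0 := by
  obtain ⟨d, h1, h2, h3⟩ := h
  refine ⟨d + 1, by rw [h1]; push_cast; ring, h2, ?_⟩
  rw [pow_succ, ← Nat.div_div_eq_div_mul, h3]; omega

theorem Bitile.ext' {P Q : Bitile} (h1 : P.k = Q.k) (h2 : P.n = Q.n) (h3 : P.l = Q.l) : P = Q := by
  cases P; cases Q; simp_all

theorem Tile.ext' {P Q : Tile} (h1 : P.k = Q.k) (h2 : P.n = Q.n) (h3 : P.l = Q.l) : P = Q := by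
  cases P; cases Q; simp_all

theorem bl_cases {P P0 : Bitile} (h : bl P P0) : P = P0 ∨ sub 0 P P0 ∨ sub 1 P P0 := by
  obtain ⟨d, h1, h2, h3⟩ := h
  rcases d with _ | d
  · left; simp at h1 h2 h3; exact Bitile.ext' h1.symm h2 h3.symm
  · right
    rw [pow_succ, ← Nat.div_div_eq_div_mul] at h3
    rcases Nat.mod_two_eq_zero_or_one (P0.l / 2 ^ d) with h | h
    · left; exact ⟨d, by rw [h1]; push_cast; ring, h2, by omega⟩
    · right; exact ⟨d, by rw [h1]; push_cast; ring, h2, by omega⟩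

theorem not_sub_self {b : ℕ} {P : Bitile} : ¬ sub b P P := by
  rintro ⟨d, h, -⟩; omega

theorem sub_unique {b c : ℕ} {P P0 : Bitile} (h : sub b P P0) (h' : sub c P P0) : b = c := by
  obtain ⟨d, h1, h2, h3⟩ := h
  obtain ⟨e, g1, g2, g3⟩ := h'
  have : d = e := by omega
  subst this; omega

theorem tl_h_bl {b : ℕ} (hb : b < 2) {P Q : Bitile} (h : tl (P.h b) (Q.h b)) : bl P Q := by
  obtain ⟨d, h1, h2, h3⟩ := h
  simp only [Bitile.h] at h1 h2 h3
  refine ⟨d, h1, h2, ?_⟩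
  have : (2 * Q.l + b) / 2 ^ d / 2 = P.l := by omega
  rw [Nat.div_div_eq_div_mul, mul_comm (2 ^ d) 2, ← Nat.div_div_eq_div_mul] at this
  have h4 : (2 * Q.l + b) / 2 = Q.l := by omega
  rwa [h4] at this

/-- if halves are comparable and the bitiles differ, then it is strictly below with type `b`. -/
theorem tl_h_sub {b : ℕ} (hb : b < 2) {P Q : Bitile} (h : tl (P.h b) (Q.h b)) (hne : P ≠ Q) :
    sub b P Q := by
  obtain ⟨d, h1, h2, h3⟩ := h
  simp only [Bitile.h] at h1 h2 h3
  rcases d with _ | d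
  · exfalso; apply hne; simp at h1 h2 h3; exact Bitile.ext' h1.symm h2 h3.symm
  · refine ⟨d, by rw [h1]; push_cast; ring, h2, ?_⟩
    have : (2 * Q.l + b) / 2 = Q.l := by omega
    rwa [pow_succ', ← Nat.div_div_eq_div_mul, this] at h3

theorem sub_bl_trans {b : ℕ} {P Q R : Bitile} (h : sub b P Q) (h' : bl Q R) : sub b P R := by
  obtain ⟨d, h1, h2, h3⟩ := h
  obtain ⟨e, g1, g2, g3⟩ := h'
  refine ⟨d + e, by rw [g1, h1]; push_cast; ring, ?_, ?_⟩
  · rw [show d + e + 1 = (d + 1) + e by ring, pow_add, ← Nat.div_div_eq_div_mul, h2, g2]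
  · rw [add_comm, pow_add, ← Nat.div_div_eq_div_mul, g3, h3]

/-- frequency key of a bitile -/
def fkey (P : Bitile) : ℝ := (2:ℝ) ^ (-P.k) * P.l

theorem sub_fkey {b : ℕ} {P Q : Bitile} (h : sub b P Q) :
    (2 * P.l + b : ℝ) ≤ (2:ℝ) ^ (P.k + 1) * fkey Q ∧
      (2:ℝ) ^ (P.k + 1) * fkey Q < (2 * P.l + b + 1 : ℝ) := by
  obtain ⟨d, h1, h2, h3⟩ := h
  have e : (2:ℝ) ^ (P.k + 1) * fkey Q = (Q.l : ℝ) / 2 ^ d := by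
    rw [fkey, ← mul_assoc, ← zpow_add₀ (by norm_num), h1,
      show P.k + 1 + -(P.k + d + 1) = -(d:ℤ) by ring, zpow_neg, zpow_natCast]
    field_simp
  have hp : 0 < 2 ^ d := by positivity
  rw [e]
  constructor
  · rw [le_div_iff₀ (by positivity)]
    have := (Nat.le_div_iff_mul_le hp).1 h3.ge
    exact_mod_cast this
  · rw [div_lt_iff₀ (by positivity)]
    have := (Nat.div_lt_iff_lt_mul hp).1 (h3.trans_lt (Nat.lt_succ_self _))
    exact_mod_cast this

/-- generic selection data -/
structure SelData (sb : Bitile → Bitile → Prop) (g : Bitile → Tile) (key : Bitile → ℝ) : Prop where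
  le : ∀ P P0, sb P P0 → bl P P0
  inner : ∀ P P' P0, sb P P0 → sb P' P0 → P ≠ P' → ¬ tl (g P) (g P')
  cross : ∀ P P' P0 P0', sb P P0 → sb P' P0' → ¬ bl P' P0 → key P0' ≤ key P0 →
    ¬ tl (g P) (g P') ∧ ¬ tl (g P') (g P)

theorem selData_top {b : ℕ} (hb : b < 2) :
    SelData (fun P P0 => P = P0) (Bitile.h b) (fun P => (P.k : ℝ)) where
  le := by rintro P _ rfl; exact bl_refl _
  inner := by rintro P P' _ rfl rfl h; exact absurd rfl h
  cross := by
    rintro P P' _ _ rfl rfl h1 h2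
    have h2' : P'.k ≤ P.k := by exact_mod_cast h2
    refine ⟨fun h => h1 ?_, fun h => h1 (tl_h_bl hb h)⟩
    obtain ⟨d, e1, e2, e3⟩ := tl_h_bl hb h
    have : d = 0 := by omega
    subst this
    exact ⟨0, by simp at *; omega, by simpa using e2.symm, by simpa using e3.symm⟩

theorem selData_sub {b c : ℕ} (hbc : (b = 0 ∧ c = 1) ∨ (b = 1 ∧ c = 0)) :
    SelData (sub b) (Bitile.h c) (fun P => (1 - 2 * (b:ℝ)) * fkey P) where
  le := fun P P0 h => sub_bl (by omega) h
  inner := by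
    intro P P' P0 h h' hne ht
    have h1 := tl_h_sub (by omega) ht hne
    have h2 := sub_bl_trans h1 (sub_bl (by omega) h')
    have := sub_unique h h2
    omega
  cross := by
    intro P P' P0 P0' h h' hn hk
    refine ⟨fun ht => ?_, fun ht => ?_⟩
    · have hne : P ≠ P' := by
        rintro rfl; exact hn (sub_bl (by omega) h)
      have h1 := tl_h_sub (by omega) ht hne
      have h2 := sub_bl_trans h1 (sub_bl (by omega) h')
      obtain ⟨a1, a2⟩ := sub_fkey h
      obtain ⟨b1, b2⟩ := sub_fkey h2
      have hp : (0:ℝ) < (2:ℝ) ^ (P.k + 1) := by positivity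
      rcases hbc with ⟨rfl, rfl⟩ | ⟨rfl, rfl⟩
      · simp at hk a2 b1
        have := mul_le_mul_of_nonneg_left hk hp.le
        linarith
      · norm_num at hk a1 b2
        have := mul_le_mul_of_nonneg_left hk hp.le
        linarith
    · exact hn (bl_trans (tl_h_bl (by omega) ht) (sub_bl (by omega) h))

/-- Bessel property -/
def Bes (e : Tile → ℝ) (E : ℝ) : Prop :=
  ∀ 𝔭 : Finset Tile, (∀ p ∈ 𝔭, ∀ q ∈ 𝔭, p ≠ q → ¬ tl p q) → ∑ p ∈ 𝔭, e p ≤ E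

open Classical in
/-- remove the bitiles below tops in `𝕋` -/
def rem (PP 𝕋 : Finset Bitile) : Finset Bitile := PP.filter (fun P => ∀ T ∈ 𝕋, ¬ bl P T)

open Classical in
theorem select_aux {sb : Bitile → Bitile → Prop} {g : Bitile → Tile} {key : Bitile → ℝ}
    (hd : SelData sb g key) (e : Tile → ℝ) (he : ∀ p, 0 ≤ e p) (s : ℝ) (m : ℕ) :
    ∀ PP : Finset Bitile, PP.card ≤ m → ∃ 𝕋 S : Finset Bitile, 𝕋 ⊆ PP ∧ S ⊆ PP ∧
      (∀ P ∈ S, ∀ Q ∈ S, P ≠ Q → ¬ tl (g P) (g Q)) ∧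
      (∀ P ∈ S, ∃ T ∈ 𝕋, sb P T) ∧
      (∀ T ∈ 𝕋, s * (2:ℝ) ^ T.k < ∑ P ∈ PP.filter (fun P => sb P T), e (g P)) ∧
      s * ∑ T ∈ 𝕋, (2:ℝ) ^ T.k ≤ ∑ P ∈ S, e (g P) ∧
      ∀ P0 ∈ rem PP 𝕋, ∑ P ∈ (rem PP 𝕋).filter (fun P => sb P P0), e (g P) ≤ s * (2:ℝ) ^ P0.k := by
  induction m with
  | zero =>
    intro PP h
    have : PP = ∅ := by simpa using h
    subst this
    exact ⟨∅, ∅, by simp, by simp, by simp, by simp, by simp, by simp, by simp [rem]⟩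
  | succ m ih =>
    intro PP hcard
    set bad := PP.filter (fun T => s * (2:ℝ) ^ T.k < ∑ P ∈ PP.filter (fun P => sb P T), e (g P))
      with hbad
    by_cases hne : bad.Nonempty
    · obtain ⟨P0, hP0, hmax⟩ := Finset.exists_max_image bad key hne
      have hP0' := (Finset.mem_filter.1 hP0)
      set PP1 := rem PP {P0} with hPP1
      have hPP1s : PP1 ⊆ PP := Finset.filter_subset _ _
      have hPP1n : ∀ P ∈ PP1, ¬ bl P P0 := by
        intro P hP; have := (Finset.mem_filter.1 hP).2; simpa using this
      have hc : PP1.card ≤ m := by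
        have : PP1.card < PP.card := Finset.card_lt_card
          ⟨hPP1s, fun h => hPP1n P0 (h hP0'.1) (bl_refl _)⟩
        omega
      obtain ⟨𝕋, S, h1, h2, h3, h4, h5, h6, h7⟩ := ih PP1 hc
      have hmono : ∀ T, ∑ P ∈ PP1.filter (fun P => sb P T), e (g P) ≤
          ∑ P ∈ PP.filter (fun P => sb P T), e (g P) := fun T =>
        Finset.sum_le_sum_of_subset_of_nonneg (Finset.filter_subset_filter _ hPP1s)
          (fun _ _ _ => he _)
      have hrem : rem PP (insert P0 𝕋) = rem PP1 𝕋 := by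
        ext P
        simp only [rem, hPP1, Finset.mem_filter, Finset.mem_insert, Finset.mem_singleton,
          forall_eq_or_imp, forall_eq]
        tauto
      have hkey : ∀ T ∈ 𝕋, key T ≤ key P0 := fun T hT =>
        hmax T (Finset.mem_filter.2 ⟨hPP1s (h1 hT), (h5 T hT).trans_le (hmono T)⟩)
      refine ⟨insert P0 𝕋, PP.filter (fun P => sb P P0) ∪ S, ?_, ?_, ?_, ?_, ?_, ?_, ?_⟩
      · exact Finset.insert_subset hP0'.1 (h1.trans hPP1s)
      · exact Finset.union_subset (Finset.filter_subset _ _) (h2.trans hPP1s)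
      · intro P hP Q hQ hPQ
        rcases Finset.mem_union.1 hP with hP | hP <;> rcases Finset.mem_union.1 hQ with hQ | hQ
        · exact hd.inner P Q P0 (Finset.mem_filter.1 hP).2 (Finset.mem_filter.1 hQ).2 hPQ
        · obtain ⟨T, hT, hQT⟩ := h4 Q hQ
          exact (hd.cross P Q P0 T (Finset.mem_filter.1 hP).2 hQT (hPP1n Q (h2 hQ)) (hkey T hT)).1
        · obtain ⟨T, hT, hQT⟩ := h4 P hP
          exact (hd.cross Q P P0 T (Finset.mem_filter.1 hQ).2 hQT (hPP1n P (h2 hP)) (hkey T hT)).2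
        · exact h3 P hP Q hQ hPQ
      · intro P hP
        rcases Finset.mem_union.1 hP with hP | hP
        · exact ⟨P0, by simp, (Finset.mem_filter.1 hP).2⟩
        · obtain ⟨T, hT, hQT⟩ := h4 P hP
          exact ⟨T, by simp [hT], hQT⟩
      · intro T hT
        rcases Finset.mem_insert.1 hT with rfl | hT
        · exact hP0'.2
        · exact (h5 T hT).trans_le (hmono T)
      · have hnot : P0 ∉ 𝕋 := fun h => hPP1n P0 (h1 h) (bl_refl _)
        have hdisj : Disjoint (PP.filter (fun P => sb P P0)) S := by
          rw [Finset.disjoint_left]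
          intro P hP hPS
          exact hPP1n P (h2 hPS) (hd.le _ _ (Finset.mem_filter.1 hP).2)
        rw [Finset.sum_insert hnot, Finset.sum_union hdisj, mul_add]
        exact add_le_add hP0'.2.le h6
      · rw [hrem]; exact h7
    · refine ⟨∅, ∅, by simp, by simp, by simp, by simp, by simp, by simp, ?_⟩
      have : rem PP ∅ = PP := by simp [rem]
      rw [this]
      intro P0 hP0
      by_contra hcon
      exact hne ⟨P0, Finset.mem_filter.2 ⟨hP0, not_le.1 hcon⟩⟩

open Classical in
theorem select_one {sb : Bitile → Bitile → Prop} {g : Bitile → Tile} {key : Bitile → ℝ}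
    (hd : SelData sb g key) (hg : Function.Injective g) (e : Tile → ℝ) (he : ∀ p, 0 ≤ e p)
    {E : ℝ} (hE : Bes e E) (s : ℝ) (PP : Finset Bitile) :
    ∃ 𝕋 : Finset Bitile, 𝕋 ⊆ PP ∧ s * ∑ T ∈ 𝕋, (2:ℝ) ^ T.k ≤ E ∧
      ∀ P0 ∈ rem PP 𝕋, ∑ P ∈ (rem PP 𝕋).filter (fun P => sb P P0), e (g P) ≤ s * (2:ℝ) ^ P0.k := by
  obtain ⟨𝕋, S, h1, h2, h3, h4, h5, h6, h7⟩ := select_aux hd e he s PP.card PP le_rfl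
  refine ⟨𝕋, h1, h6.trans ?_, h7⟩
  have := hE (S.image g) (by
    intro p hp q hq hpq
    obtain ⟨P, hP, rfl⟩ := Finset.mem_image.1 hp
    obtain ⟨Q, hQ, rfl⟩ := Finset.mem_image.1 hq
    exact h3 P hP Q hQ (fun h => hpq (by rw [h])))
  rwa [Finset.sum_image (fun _ _ _ _ h => hg h)] at this

theorem h_inj (b : ℕ) : Function.Injective (Bitile.h b) := by
  intro P Q h
  simp only [Bitile.h, Tile.mk.injEq] at h
  exact Bitile.ext' h.1 h.2.1 (by omega)

open Classical in
/-- size condition (squared) -/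
structure Sz (e : Tile → ℝ) (PP : Finset Bitile) (s : ℝ) : Prop where
  top : ∀ P ∈ PP, ∀ b < 2, e (P.h b) ≤ s * (2:ℝ) ^ P.k
  lac : ∀ b c, ((b = 0 ∧ c = 1) ∨ (b = 1 ∧ c = 0)) → ∀ P0 ∈ PP,
    ∑ P ∈ PP.filter (fun P => sub b P P0), e (P.h c) ≤ s * (2:ℝ) ^ P0.k

theorem rem_anti (PP : Finset Bitile) {𝕋 𝕋' : Finset Bitile} (h : 𝕋 ⊆ 𝕋') :
    rem PP 𝕋' ⊆ rem PP 𝕋 := by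
  classical
  intro P hP
  simp only [rem, Finset.mem_filter] at hP ⊢
  exact ⟨hP.1, fun T hT => hP.2 T (h hT)⟩

open Classical in
theorem Sz.mono {e : Tile → ℝ} (he : ∀ p, 0 ≤ e p) {PP PP' : Finset Bitile} {s : ℝ} (h : Sz e PP s)
    (hs : PP' ⊆ PP) : Sz e PP' s where
  top := fun P hP => h.top P (hs hP)
  lac := fun b c hbc P0 hP0 => (Finset.sum_le_sum_of_subset_of_nonneg
    (Finset.filter_subset_filter _ hs) (fun _ _ _ => he _)).trans (h.lac b c hbc P0 (hs hP0))

theorem select (e : Tile → ℝ) (he : ∀ p, 0 ≤ e p) {E : ℝ} (hE : Bes e E) {s : ℝ} (hs : 0 ≤ s)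
    (PP : Finset Bitile) :
    ∃ 𝕋 : Finset Bitile, 𝕋 ⊆ PP ∧ s * ∑ T ∈ 𝕋, (2:ℝ) ^ T.k ≤ 4 * E ∧ Sz e (rem PP 𝕋) s := by
  classical
  obtain ⟨T0, a1, a2, a3⟩ := select_one (selData_top (b := 0) (by omega)) (h_inj 0) e he hE s PP
  obtain ⟨T1, b1, b2, b3⟩ := select_one (selData_top (b := 1) (by omega)) (h_inj 1) e he hE s PP
  obtain ⟨T2, c1, c2, c3⟩ := select_one (selData_sub (b := 0) (c := 1) (by omega)) (h_inj 1) e he hE s PP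
  obtain ⟨T3, d1, d2, d3⟩ := select_one (selData_sub (b := 1) (c := 0) (by omega)) (h_inj 0) e he hE s PP
  have key : ∀ (A B : Finset Bitile), s * ∑ T ∈ A ∪ B, (2:ℝ) ^ T.k ≤
      s * ∑ T ∈ A, (2:ℝ) ^ T.k + s * ∑ T ∈ B, (2:ℝ) ^ T.k := by
    intro A B
    rw [← mul_add, ← Finset.sum_union_inter]
    refine mul_le_mul_of_nonneg_left ?_ hs
    exact le_add_of_nonneg_right (Finset.sum_nonneg fun _ _ => by positivity)
  refine ⟨(T0 ∪ T1) ∪ (T2 ∪ T3), ?_, ?_, ?_, ?_⟩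
  · exact Finset.union_subset (Finset.union_subset a1 b1) (Finset.union_subset c1 d1)
  · have := key (T0 ∪ T1) (T2 ∪ T3)
    have := key T0 T1
    have := key T2 T3
    linarith
  · intro P hP b hb
    have hb' : b = 0 ∨ b = 1 := by omega
    have m0 : T0 ⊆ (T0 ∪ T1) ∪ (T2 ∪ T3) := by intro x; simp; tauto
    have m1 : T1 ⊆ (T0 ∪ T1) ∪ (T2 ∪ T3) := by intro x; simp; tauto
    rcases hb' with rfl | rfl
    · refine le_trans ?_ (a3 P (rem_anti _ m0 hP))
      refine Finset.single_le_sum (f := fun P => e (Bitile.h 0 P)) (fun _ _ => he _) ?_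
      exact Finset.mem_filter.2 ⟨rem_anti _ m0 hP, rfl⟩
    · refine le_trans ?_ (b3 P (rem_anti _ m1 hP))
      refine Finset.single_le_sum (f := fun P => e (Bitile.h 1 P)) (fun _ _ => he _) ?_
      exact Finset.mem_filter.2 ⟨rem_anti _ m1 hP, rfl⟩
  · intro b c hbc P0 hP0
    have m2 : T2 ⊆ (T0 ∪ T1) ∪ (T2 ∪ T3) := by intro x; simp; tauto
    have m3 : T3 ⊆ (T0 ∪ T1) ∪ (T2 ∪ T3) := by intro x; simp; tauto
    rcases hbc with ⟨rfl, rfl⟩ | ⟨rfl, rfl⟩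
    · refine le_trans ?_ (c3 P0 (rem_anti _ m2 hP0))
      exact Finset.sum_le_sum_of_subset_of_nonneg
        (Finset.filter_subset_filter _ (rem_anti _ m2)) (fun _ _ _ => he _)
    · refine le_trans ?_ (d3 P0 (rem_anti _ m3 hP0))
      exact Finset.sum_le_sum_of_subset_of_nonneg
        (Finset.filter_subset_filter _ (rem_anti _ m3)) (fun _ _ _ => he _)

end

section

/-- convexity of a finite collection of bitiles -/
def Cvx (PP : Finset Bitile) : Prop :=
  ∀ P1 P P2 : Bitile, P1 ∈ PP → P2 ∈ PP → bl P1 P → bl P P2 → P ∈ PP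

theorem Cvx.rem {PP : Finset Bitile} (h : Cvx PP) (𝕋 : Finset Bitile) : Cvx (rem PP 𝕋) := by
  classical
  intro P1 P P2 h1 h2 h3 h4
  simp only [Quartile.rem, Finset.mem_filter] at *
  exact ⟨h P1 P P2 h1.1 h2.1 h3 h4, fun T hT hPT => h1.2 T hT (bl_trans h3 hPT)⟩

/-- index of the half of `P` containing the frequency of `P0` -/
def tht (P0 P : Bitile) : ℕ := P0.l / 2 ^ (P0.k - P.k - 1).toNat

theorem tht_sub {b : ℕ} {P P0 : Bitile} (h : sub b P P0) : tht P0 P = 2 * P.l + b := by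
  obtain ⟨d, h1, h2, h3⟩ := h
  rw [tht, h1, show (P.k + d + 1 - P.k - 1 : ℤ) = d by ring, Int.toNat_natCast, h3]

/-- children -/
def ch (c : ℕ) (P : Bitile) : Bitile := ⟨P.k - 1, 2 * P.n + c, P.l / 2⟩

theorem tht_ch {P P0 : Bitile} (h : bl P P0) (c : ℕ) : tht P0 (ch c P) = P.l := by
  obtain ⟨d, h1, h2, h3⟩ := h
  rw [tht, h1, ch]; simp only
  rw [show (P.k + d - (P.k - 1) - 1 : ℤ) = d by ring, Int.toNat_natCast, h3]

/-- parent with respect to a top -/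
def par (P0 C : Bitile) : Bitile := ⟨C.k + 1, C.n / 2, tht P0 C⟩

theorem bl_par {b : ℕ} (hb : b < 2) {P0 C : Bitile} (h : sub b C P0) :
    bl C (par P0 C) ∧ bl (par P0 C) P0 := by
  have ht := tht_sub h
  obtain ⟨d, h1, h2, h3⟩ := h
  refine ⟨⟨1, rfl, by simp [par], by simp only [par, ht]; omega⟩,
    ⟨d, by simp only [par]; omega, ?_, ?_⟩⟩
  · simp only [par]
    rwa [Nat.div_div_eq_div_mul, ← pow_succ']
  · simp only [par]; rw [ht, h3]

theorem sub_ne {b : ℕ} {P P0 : Bitile} (h : sub b P P0) : P ≠ P0 := by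
  rintro rfl; exact not_sub_self h

theorem eq_ch_of_par {b : ℕ} (hb : b < 2) {P0 C P : Bitile} (h : sub b C P0) (hp : par P0 C = P) :
    C = ch 0 P ∨ C = ch 1 P := by
  subst hp
  have ht := tht_sub h
  rcases Nat.mod_two_eq_zero_or_one C.n with hm | hm
  · left
    refine Bitile.ext' ?_ ?_ ?_ <;> simp only [ch, par, ht] <;> omega
  · right
    refine Bitile.ext' ?_ ?_ ?_ <;> simp only [ch, par, ht] <;> omega

theorem par_ch {P0 P : Bitile} (h : bl P P0) {c : ℕ} (hc : c < 2) : par P0 (ch c P) = P := by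
  refine Bitile.ext' ?_ ?_ ?_
  · simp [par, ch]
  · simp only [par, ch]; omega
  · simp only [par]; exact tht_ch h c

open Classical in
theorem square_fn (b : Tile → ℂ) (r : Tile → ℝ) (hr : ∀ p, 0 ≤ r p)
    (hb1 : ∀ k n l, b ⟨k, n, 2 * l⟩ + b ⟨k, n, 2 * l + 1⟩ =
      b ⟨k - 1, 2 * n, l⟩ + b ⟨k - 1, 2 * n + 1, l⟩)
    (hb2 : ∀ k n l, ‖b ⟨k - 1, 2 * n, l⟩‖ + ‖b ⟨k - 1, 2 * n + 1, l⟩‖ ≤ r ⟨k, n, l⟩)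
    {PP : Finset Bitile} (hcv : Cvx PP) {s : ℝ} (hs : 0 ≤ s) (hsz : Sz r PP s)
    {P0 : Bitile} (hP0 : P0 ∈ PP) :
    ∑ P ∈ PP.filter (fun P => sub 0 P P0),
      ‖b ⟨P.k - 1, 2 * P.n, 2 * P.l⟩ - b ⟨P.k - 1, 2 * P.n + 1, 2 * P.l⟩‖ ^ 2 / (2:ℝ) ^ P.k
      ≤ 12 * s ^ 2 * (2:ℝ) ^ P0.k := by
  set T := PP.filter (fun P => sub 0 P P0 ∨ sub 1 P P0) with hT
  set x : ℕ → Bitile → ℂ := fun c P => b ⟨P.k - 1, 2 * P.n + c, tht P0 P⟩ with hx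
  set ψ : Bitile → ℝ := fun P => ‖x 0 P + x 1 P‖ ^ 2 / (2:ℝ) ^ P.k - 4 * s ^ 2 * (2:ℝ) ^ P.k with hψ
  set oth : Bitile → Tile := fun P => ⟨P.k, P.n, 4 * P.l + 1 - tht P0 P⟩ with hoth
  have hTbl : ∀ P ∈ T, bl P P0 := by
    intro P hP
    rcases (Finset.mem_filter.1 hP).2 with h | h
    · exact sub_bl (by norm_num) h
    · exact sub_bl (by norm_num) h
  have hTsub : ∀ P ∈ T, ∃ c < 2, sub c P P0 := by
    intro P hP
    rcases (Finset.mem_filter.1 hP).2 with h | h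
    · exact ⟨0, by norm_num, h⟩
    · exact ⟨1, by norm_num, h⟩
  have hTPP : ∀ P ∈ T, P ∈ PP := fun P hP => (Finset.mem_filter.1 hP).1
  have hxr : ∀ c < 2, ∀ n k l, ‖b ⟨k - 1, 2 * n + c, l⟩‖ ≤ r ⟨k, n, l⟩ := by
    intro c hc n k l
    have h := hb2 k n l
    have h1 := norm_nonneg (b ⟨k - 1, 2 * n, l⟩)
    have h2 := norm_nonneg (b ⟨k - 1, 2 * n + 1, l⟩)
    interval_cases c
    · simp only [add_zero]; linarith
    · linarith
  have hrθ : ∀ P ∈ T, r ⟨P.k, P.n, tht P0 P⟩ ≤ s * (2:ℝ) ^ P.k := by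
    intro P hP
    obtain ⟨c, hc, h⟩ := hTsub P hP
    have := hsz.top P (hTPP P hP) c hc
    rwa [Bitile.h, ← tht_sub h] at this
  have hro : ∀ P ∈ T, r (oth P) ≤ s * (2:ℝ) ^ P.k := by
    intro P hP
    obtain ⟨c, hc, h⟩ := hTsub P hP
    have := hsz.top P (hTPP P hP) (1 - c) (by omega)
    rw [Bitile.h] at this
    have e : 4 * P.l + 1 - tht P0 P = 2 * P.l + (1 - c) := by rw [tht_sub h]; omega
    simp only [hoth, e]; exact this
  -- one child
  have hchild : ∀ P ∈ T, ∀ c < 2, 2 * ‖x c P‖ ^ 2 / (2:ℝ) ^ P.k ≤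
      (if ch c P ∈ T then ψ (ch c P) else 0) + 2 * s ^ 2 * (2:ℝ) ^ P.k +
        4 * s * ‖b ⟨P.k - 1, 2 * P.n + c, 4 * P.l + 1 - tht P0 P⟩‖ := by
    intro P hP c hc
    set ρ := b ⟨P.k - 1, 2 * P.n + c, 4 * P.l + 1 - tht P0 P⟩ with hρ
    have hK : (0:ℝ) < (2:ℝ) ^ P.k := by positivity
    set K := (2:ℝ) ^ P.k with hKdef
    split_ifs with hin
    · have hM : x 0 (ch c P) + x 1 (ch c P) = x c P + ρ := by
        have h := hb1 (P.k - 1) (2 * P.n + c) P.l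
        have e : x 0 (ch c P) + x 1 (ch c P) =
            b ⟨P.k - 1, 2 * P.n + c, 2 * P.l⟩ + b ⟨P.k - 1, 2 * P.n + c, 2 * P.l + 1⟩ := by
          rw [h]; simp only [hx, tht_ch (hTbl P hP)]; rfl
        rw [e]
        obtain ⟨c', hc', h'⟩ := hTsub P hP
        simp only [hx, hρ, tht_sub h']
        interval_cases c'
        · rw [show 4 * P.l + 1 - (2 * P.l + 0) = 2 * P.l + 1 by omega]; simp
        · rw [show 4 * P.l + 1 - (2 * P.l + 1) = 2 * P.l by omega, add_comm]
      have hk : (2:ℝ) ^ (ch c P).k = K / 2 := by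
        simp only [ch]; rw [zpow_sub_one₀ (by norm_num)]; ring
      have hMb : ‖x c P + ρ‖ ≤ s * (K / 2) := by
        have h1 := hrθ _ hin
        rw [hk] at h1
        rw [← hM]
        refine (norm_add_le _ _).trans (le_trans ?_ h1)
        exact hb2 _ _ _
      have hρb : ‖ρ‖ ≤ s * K := (hxr c hc _ _ _).trans (hro P hP)
      have hxle : ‖x c P‖ ≤ ‖x c P + ρ‖ + ‖ρ‖ := by
        have := norm_sub_le (x c P + ρ) ρ
        simpa using this
      have hsq : ‖x c P‖ ^ 2 ≤ ‖x c P + ρ‖ ^ 2 + 2 * s * K * ‖ρ‖ := by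
        have h0 := norm_nonneg (x c P)
        have h1 := norm_nonneg ρ
        have h2 := norm_nonneg (x c P + ρ)
        nlinarith
      simp only [hψ, hM, hk]
      rw [div_le_iff₀ hK]
      have e1 : ‖x c P + ρ‖ ^ 2 / (K / 2) * K = 2 * ‖x c P + ρ‖ ^ 2 := by field_simp
      have e2 : (‖x c P + ρ‖ ^ 2 / (K / 2) - 4 * s ^ 2 * (K / 2) + 2 * s ^ 2 * K + 4 * s * ‖ρ‖) * K
          = ‖x c P + ρ‖ ^ 2 / (K / 2) * K + 4 * s * ‖ρ‖ * K := by ring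
      rw [e2, e1]
      nlinarith
    · have h1 : ‖x c P‖ ≤ s * K := (hxr c hc _ _ _).trans (hrθ P hP)
      have h0 := norm_nonneg (x c P)
      have h2 : 2 * ‖x c P‖ ^ 2 / K ≤ 2 * s ^ 2 * K := by
        rw [div_le_iff₀ hK]
        nlinarith
      have h3 : 0 ≤ 4 * s * ‖ρ‖ := by positivity
      linarith
  have hfib : ∀ P ∈ T, ∑ C ∈ T.filter (fun C => par P0 C = P), ψ C =
      (if ch 0 P ∈ T then ψ (ch 0 P) else 0) + (if ch 1 P ∈ T then ψ (ch 1 P) else 0) := by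
    intro P hP
    have e : T.filter (fun C => par P0 C = P) = ({ch 0 P, ch 1 P} : Finset Bitile).filter (· ∈ T) := by
      ext C
      simp only [Finset.mem_filter, Finset.mem_insert, Finset.mem_singleton]
      constructor
      · rintro ⟨h1, h2⟩
        obtain ⟨c, hc, h⟩ := hTsub C h1
        exact ⟨eq_ch_of_par hc h h2, h1⟩
      · rintro ⟨h1 | h1, h2⟩
        · exact ⟨h2, by rw [h1]; exact par_ch (hTbl P hP) (by norm_num)⟩
        · exact ⟨h2, by rw [h1]; exact par_ch (hTbl P hP) (by norm_num)⟩
    rw [e, Finset.sum_filter, Finset.sum_pair]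
    simp [ch]
  have hkey : ∀ P ∈ T, ‖x 0 P - x 1 P‖ ^ 2 / (2:ℝ) ^ P.k ≤
      ∑ C ∈ T.filter (fun C => par P0 C = P), ψ C - ψ P + 4 * s * r (oth P) := by
    intro P hP
    rw [hfib P hP]
    have h0 := hchild P hP 0 (by norm_num)
    have h1 := hchild P hP 1 (by norm_num)
    have h2 := hb2 P.k P.n (4 * P.l + 1 - tht P0 P)
    have h3 := parallelogram_law_with_norm ℝ (x 0 P) (x 1 P)
    have h4 : ‖x 0 P - x 1 P‖ ^ 2 / (2:ℝ) ^ P.k = 2 * ‖x 0 P‖ ^ 2 / (2:ℝ) ^ P.k +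
        2 * ‖x 1 P‖ ^ 2 / (2:ℝ) ^ P.k - ‖x 0 P + x 1 P‖ ^ 2 / (2:ℝ) ^ P.k := by
      rw [show ‖x 0 P - x 1 P‖ ^ 2 = 2 * ‖x 0 P‖ ^ 2 + 2 * ‖x 1 P‖ ^ 2 - ‖x 0 P + x 1 P‖ ^ 2 by
        nlinarith]
      ring
    rw [h4]
    simp only [add_zero] at h0
    have h5 := mul_le_mul_of_nonneg_left h2 (show 0 ≤ 4 * s by positivity)
    have h6 : ψ P = ‖x 0 P + x 1 P‖ ^ 2 / (2:ℝ) ^ P.k - 4 * s ^ 2 * (2:ℝ) ^ P.k := rfl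
    have h7 : r (oth P) = r ⟨P.k, P.n, 4 * P.l + 1 - tht P0 P⟩ := rfl
    rw [h6, h7]
    linarith
  have hsumfib : ∑ P ∈ T, ∑ C ∈ T.filter (fun C => par P0 C = P), ψ C =
      ∑ C ∈ T.filter (fun C => par P0 C ∈ T), ψ C := by
    rw [← Finset.sum_fiberwise_of_maps_to (s := T.filter (fun C => par P0 C ∈ T)) (t := T)
      (g := par P0) (fun C hC => (Finset.mem_filter.1 hC).2)]
    refine Finset.sum_congr rfl fun P hP => Finset.sum_congr ?_ fun _ _ => rfl
    ext C
    simp only [Finset.mem_filter]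
    constructor
    · rintro ⟨h1, rfl⟩; exact ⟨⟨h1, hP⟩, rfl⟩
    · rintro ⟨⟨h1, _⟩, h2⟩; exact ⟨h1, h2⟩
  have hbdry : -∑ C ∈ T.filter (fun C => ¬ par P0 C ∈ T), ψ C ≤ 4 * s ^ 2 * (2:ℝ) ^ P0.k := by
    have hsubset : T.filter (fun C => ¬ par P0 C ∈ T) ⊆ {ch 0 P0, ch 1 P0} := by
      intro C hC
      obtain ⟨h1, h2⟩ := Finset.mem_filter.1 hC
      obtain ⟨c, hc, h⟩ := hTsub C h1
      have h3 := bl_par hc h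
      have h4 : par P0 C = P0 := by
        rcases bl_cases h3.2 with h5 | h5
        · exact h5
        · exact absurd (Finset.mem_filter.2 ⟨hcv C _ P0 (hTPP C h1) hP0 h3.1 h3.2, h5⟩) h2
      simpa using eq_ch_of_par hc h h4
    calc -∑ C ∈ T.filter (fun C => ¬ par P0 C ∈ T), ψ C
        = ∑ C ∈ T.filter (fun C => ¬ par P0 C ∈ T), -ψ C := by rw [Finset.sum_neg_distrib]
      _ ≤ ∑ C ∈ T.filter (fun C => ¬ par P0 C ∈ T), 4 * s ^ 2 * (2:ℝ) ^ C.k := by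
          refine Finset.sum_le_sum fun C _ => ?_
          have : 0 ≤ ‖x 0 C + x 1 C‖ ^ 2 / (2:ℝ) ^ C.k := by positivity
          simp only [hψ]; linarith
      _ ≤ ∑ C ∈ ({ch 0 P0, ch 1 P0} : Finset Bitile), 4 * s ^ 2 * (2:ℝ) ^ C.k :=
          Finset.sum_le_sum_of_subset_of_nonneg hsubset fun _ _ _ => by positivity
      _ = 4 * s ^ 2 * (2:ℝ) ^ P0.k := by
          rw [Finset.sum_pair (by simp [ch])]
          simp only [ch]; rw [zpow_sub_one₀ (by norm_num)]; ring
  have hoths : ∑ P ∈ T, r (oth P) ≤ 2 * s * (2:ℝ) ^ P0.k := by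
    have hd : Disjoint (PP.filter (fun P => sub 0 P P0)) (PP.filter (fun P => sub 1 P P0)) := by
      rw [Finset.disjoint_left]
      intro P h1 h2
      exact absurd (sub_unique (Finset.mem_filter.1 h1).2 (Finset.mem_filter.1 h2).2) (by norm_num)
    rw [hT, Finset.filter_or, Finset.sum_union hd]
    have h0 := hsz.lac 0 1 (by simp) P0 hP0
    have h1 := hsz.lac 1 0 (by simp) P0 hP0
    have e0 : ∑ P ∈ PP.filter (fun P => sub 0 P P0), r (oth P) =
        ∑ P ∈ PP.filter (fun P => sub 0 P P0), r (P.h 1) := by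
      refine Finset.sum_congr rfl fun P hP => ?_
      simp only [hoth, Bitile.h, tht_sub (Finset.mem_filter.1 hP).2]
      rw [show 4 * P.l + 1 - (2 * P.l + 0) = 2 * P.l + 1 by omega]
    have e1 : ∑ P ∈ PP.filter (fun P => sub 1 P P0), r (oth P) =
        ∑ P ∈ PP.filter (fun P => sub 1 P P0), r (P.h 0) := by
      refine Finset.sum_congr rfl fun P hP => ?_
      simp only [hoth, Bitile.h, tht_sub (Finset.mem_filter.1 hP).2]
      rw [show 4 * P.l + 1 - (2 * P.l + 1) = 2 * P.l + 0 by omega]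
    rw [e0, e1]; linarith
  have hmain : ∑ P ∈ T, ‖x 0 P - x 1 P‖ ^ 2 / (2:ℝ) ^ P.k ≤ 12 * s ^ 2 * (2:ℝ) ^ P0.k := by
    have h1 := Finset.sum_le_sum hkey
    rw [Finset.sum_add_distrib, Finset.sum_sub_distrib, hsumfib, ← Finset.mul_sum] at h1
    have h2 := Finset.sum_filter_add_sum_filter_not T (fun C => par P0 C ∈ T) ψ
    have h3 := mul_le_mul_of_nonneg_left hoths (show 0 ≤ 4 * s by positivity)
    nlinarith
  refine le_trans ?_ hmain
  have e : ∀ P ∈ PP.filter (fun P => sub 0 P P0),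
      ‖b ⟨P.k - 1, 2 * P.n, 2 * P.l⟩ - b ⟨P.k - 1, 2 * P.n + 1, 2 * P.l⟩‖ ^ 2 / (2:ℝ) ^ P.k =
      ‖x 0 P - x 1 P‖ ^ 2 / (2:ℝ) ^ P.k := by
    intro P hP
    simp only [hx, tht_sub (Finset.mem_filter.1 hP).2, add_zero]
  rw [Finset.sum_congr rfl e]
  refine Finset.sum_le_sum_of_subset_of_nonneg ?_ fun _ _ _ => by positivity
  intro P hP
  exact Finset.mem_filter.2 ⟨(Finset.mem_filter.1 hP).1, Or.inl (Finset.mem_filter.1 hP).2⟩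

open Classical in
theorem Sz.sqrt_mul {e f : Tile → ℝ} (he : ∀ p, 0 ≤ e p) (hf : ∀ p, 0 ≤ f p) {PP : Finset Bitile}
    {s t : ℝ} (hs : 0 ≤ s) (h : Sz e PP s) (h' : Sz f PP t) :
    Sz (fun p => √(e p) * √(f p)) PP (√s * √t) where
  top := by
    intro P hP b hb
    have h1 := Real.sqrt_le_sqrt (h.top P hP b hb)
    have h2 := Real.sqrt_le_sqrt (h'.top P hP b hb)
    have hK : (0:ℝ) ≤ (2:ℝ) ^ P.k := by positivity
    calc _ ≤ √(s * (2:ℝ) ^ P.k) * √(t * (2:ℝ) ^ P.k) := by gcongr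
      _ = _ := by
        rw [Real.sqrt_mul' _ hK, Real.sqrt_mul' _ hK]
        have := Real.mul_self_sqrt hK
        linear_combination (√s * √t) * this
  lac := by
    intro b c hbc P0 hP0
    have h1 := Real.sqrt_le_sqrt (h.lac b c hbc P0 hP0)
    have h2 := Real.sqrt_le_sqrt (h'.lac b c hbc P0 hP0)
    have hK : (0:ℝ) ≤ (2:ℝ) ^ P0.k := by positivity
    refine (Real.sum_sqrt_mul_sqrt_le _ (fun i => he _) (fun i => hf _)).trans ?_
    calc _ ≤ √(s * (2:ℝ) ^ P0.k) * √(t * (2:ℝ) ^ P0.k) := by gcongr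
      _ = _ := by
        rw [Real.sqrt_mul' _ hK, Real.sqrt_mul' _ hK]
        have := Real.mul_self_sqrt hK
        linear_combination (√s * √t) * this

end

section

/-- difference of the two halves -/
def Df (b : Tile → ℂ) (P : Bitile) : ℂ :=
  b ⟨P.k - 1, 2 * P.n, 2 * P.l⟩ - b ⟨P.k - 1, 2 * P.n + 1, 2 * P.l⟩

/-- the model term -/
def term (a b : Tile → ℂ) (P : Bitile) : ℂ :=
  a (P.h 1) * (((√((2:ℝ) ^ P.k))⁻¹ : ℝ) : ℂ) * Df b P

/-- the combinatorial data of the form -/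
structure Dat (a b : Tile → ℂ) (e1 e2 e3 : Tile → ℝ) : Prop where
  ha : ∀ p, ‖a p‖ ^ 2 ≤ e1 p
  h2 : ∀ p, 0 ≤ e2 p
  h3 : ∀ p, 0 ≤ e3 p
  hb1 : ∀ k n l, b ⟨k, n, 2 * l⟩ + b ⟨k, n, 2 * l + 1⟩ =
      b ⟨k - 1, 2 * n, l⟩ + b ⟨k - 1, 2 * n + 1, l⟩
  hb2 : ∀ k n l, ‖b ⟨k - 1, 2 * n, l⟩‖ + ‖b ⟨k - 1, 2 * n + 1, l⟩‖ ≤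
      √(e2 ⟨k, n, l⟩) * √(e3 ⟨k, n, l⟩)

theorem Dat.h1 {a b : Tile → ℂ} {e1 e2 e3 : Tile → ℝ} (D : Dat a b e1 e2 e3) (p : Tile) :
    0 ≤ e1 p := (sq_nonneg _).trans (D.ha p)

theorem norm_term (a b : Tile → ℂ) (P : Bitile) :
    ‖term a b P‖ = ‖a (P.h 1)‖ * (√((2:ℝ) ^ P.k))⁻¹ * ‖Df b P‖ := by
  rw [term, norm_mul, norm_mul, Complex.norm_real, Real.norm_of_nonneg (by positivity)]

theorem Dat.norm_term_le {a b : Tile → ℂ} {e1 e2 e3 : Tile → ℝ} (D : Dat a b e1 e2 e3)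
    {PP : Finset Bitile} {s : ℝ} (h : Sz e1 PP s) {P : Bitile} (hP : P ∈ PP) :
    ‖term a b P‖ ≤ √s * (√(e2 (P.h 0)) * √(e3 (P.h 0))) := by
  rw [norm_term]
  have hK : (0:ℝ) < (2:ℝ) ^ P.k := by positivity
  have h1 : ‖a (P.h 1)‖ ≤ √s * √((2:ℝ) ^ P.k) := by
    rw [← Real.sqrt_mul' _ hK.le]
    exact Real.le_sqrt_of_sq_le ((D.ha _).trans (h.top P hP 1 (by norm_num)))
  have h2 : ‖Df b P‖ ≤ √(e2 (P.h 0)) * √(e3 (P.h 0)) :=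
    (norm_sub_le _ _).trans (D.hb2 P.k P.n (2 * P.l))
  refine mul_le_mul ?_ h2 (norm_nonneg _) (Real.sqrt_nonneg _)
  rw [← div_eq_mul_inv, div_le_iff₀ (Real.sqrt_pos.2 hK)]
  exact h1

theorem sum_union_le' (A B : Finset Bitile) [DecidableEq Bitile] (g : Bitile → ℝ)
    (hg : ∀ P, 0 ≤ g P) : ∑ T ∈ A ∪ B, g T ≤ ∑ T ∈ A, g T + ∑ T ∈ B, g T := by
  rw [← Finset.sum_union_inter]
  exact le_add_of_nonneg_right (Finset.sum_nonneg fun _ _ => hg _)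

open Classical in
theorem tree_est {a b : Tile → ℂ} {e1 e2 e3 : Tile → ℝ} (D : Dat a b e1 e2 e3)
    {PP : Finset Bitile} (hcv : Cvx PP) {s1 s2 s3 : ℝ} (hs2 : 0 ≤ s2)
    (z1 : Sz e1 PP s1) (z2 : Sz e2 PP s2) (z3 : Sz e3 PP s3) {P0 : Bitile} (hP0 : P0 ∈ PP) :
    ‖∑ P ∈ PP.filter (fun P => bl P P0), term a b P‖ ≤
      6 * (√s1 * √s2 * √s3) * (2:ℝ) ^ P0.k := by
  have zr := Sz.sqrt_mul D.h2 D.h3 hs2 z2 z3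
  have hK : (0:ℝ) < (2:ℝ) ^ P0.k := by positivity
  have hsub : PP.filter (fun P => bl P P0) ⊆
      {P0} ∪ (PP.filter (fun P => sub 0 P P0) ∪ PP.filter (fun P => sub 1 P P0)) := by
    intro P hP
    obtain ⟨h1, h2⟩ := Finset.mem_filter.1 hP
    simp only [Finset.mem_union, Finset.mem_singleton, Finset.mem_filter]
    rcases bl_cases h2 with h | h | h <;> tauto
  have ht : ‖term a b P0‖ ≤ (√s1 * √s2 * √s3) * (2:ℝ) ^ P0.k := by
    refine (D.norm_term_le z1 hP0).trans ?_
    have := mul_le_mul_of_nonneg_left (zr.top P0 hP0 0 (by norm_num)) (Real.sqrt_nonneg s1)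
    linarith
  have hu : ∑ P ∈ PP.filter (fun P => sub 1 P P0), ‖term a b P‖ ≤
      (√s1 * √s2 * √s3) * (2:ℝ) ^ P0.k := by
    refine (Finset.sum_le_sum fun P hP => D.norm_term_le z1 (Finset.mem_filter.1 hP).1).trans ?_
    rw [← Finset.mul_sum]
    have := mul_le_mul_of_nonneg_left (zr.lac 1 0 (by simp) P0 hP0) (Real.sqrt_nonneg s1)
    linarith
  have hd : ∑ P ∈ PP.filter (fun P => sub 0 P P0), ‖term a b P‖ ≤
      4 * (√s1 * √s2 * √s3) * (2:ℝ) ^ P0.k := by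
    have h1 : ∑ P ∈ PP.filter (fun P => sub 0 P P0), ‖a (P.h 1)‖ ^ 2 ≤ s1 * (2:ℝ) ^ P0.k :=
      (Finset.sum_le_sum fun P _ => D.ha _).trans (z1.lac 0 1 (by simp) P0 hP0)
    have h2 : ∑ P ∈ PP.filter (fun P => sub 0 P P0), ((√((2:ℝ) ^ P.k))⁻¹ * ‖Df b P‖) ^ 2 ≤
        12 * (√s2 * √s3) ^ 2 * (2:ℝ) ^ P0.k := by
      refine le_trans (le_of_eq ?_) (square_fn b (fun p => √(e2 p) * √(e3 p))
        (fun p => by positivity) D.hb1 D.hb2 hcv (by positivity) zr hP0)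
      refine Finset.sum_congr rfl fun P _ => ?_
      rw [mul_pow, inv_pow, Real.sq_sqrt (by positivity), Df]
      ring
    calc ∑ P ∈ PP.filter (fun P => sub 0 P P0), ‖term a b P‖
        = ∑ P ∈ PP.filter (fun P => sub 0 P P0), ‖a (P.h 1)‖ * ((√((2:ℝ) ^ P.k))⁻¹ * ‖Df b P‖) :=
          Finset.sum_congr rfl fun P _ => by rw [norm_term, mul_assoc]
      _ ≤ √(∑ P ∈ PP.filter (fun P => sub 0 P P0), ‖a (P.h 1)‖ ^ 2) *
          √(∑ P ∈ PP.filter (fun P => sub 0 P P0), ((√((2:ℝ) ^ P.k))⁻¹ * ‖Df b P‖) ^ 2) :=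
          Real.sum_mul_le_sqrt_mul_sqrt _ _ _
      _ ≤ √(s1 * (2:ℝ) ^ P0.k) * √((4 * (√s2 * √s3)) ^ 2 * (2:ℝ) ^ P0.k) := by
          gcongr
          refine h2.trans ?_
          rw [mul_pow]
          have : 0 ≤ (√s2 * √s3) ^ 2 * (2:ℝ) ^ P0.k := by positivity
          nlinarith
      _ = _ := by
          rw [Real.sqrt_mul' _ hK.le, Real.sqrt_mul' _ hK.le, Real.sqrt_sq (by positivity)]
          have := Real.mul_self_sqrt hK.le
          linear_combination (4 * (√s1 * √s2 * √s3)) * this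
  calc _ ≤ ∑ P ∈ PP.filter (fun P => bl P P0), ‖term a b P‖ := norm_sum_le _ _
    _ ≤ ∑ P ∈ {P0} ∪ (PP.filter (fun P => sub 0 P P0) ∪ PP.filter (fun P => sub 1 P P0)),
        ‖term a b P‖ := Finset.sum_le_sum_of_subset_of_nonneg hsub fun _ _ _ => norm_nonneg _
    _ ≤ ‖term a b P0‖ + (∑ P ∈ PP.filter (fun P => sub 0 P P0), ‖term a b P‖ +
        ∑ P ∈ PP.filter (fun P => sub 1 P P0), ‖term a b P‖) := by
      refine (sum_union_le' _ _ _ fun _ => norm_nonneg _).trans ?_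
      rw [Finset.sum_singleton]
      exact add_le_add le_rfl (sum_union_le' _ _ _ fun _ => norm_nonneg _)
    _ ≤ _ := by linarith

open Classical in
theorem removal {a b : Tile → ℂ} {e1 e2 e3 : Tile → ℝ} (D : Dat a b e1 e2 e3)
    {PP : Finset Bitile} (hcv : Cvx PP) {s1 s2 s3 : ℝ} (hs2 : 0 ≤ s2)
    (z1 : Sz e1 PP s1) (z2 : Sz e2 PP s2) (z3 : Sz e3 PP s3) (𝕋 : Finset Bitile) (hT : 𝕋 ⊆ PP) :
    ‖∑ P ∈ PP, term a b P‖ ≤ ‖∑ P ∈ rem PP 𝕋, term a b P‖ +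
      6 * (√s1 * √s2 * √s3) * ∑ T ∈ 𝕋, (2:ℝ) ^ T.k := by
  induction 𝕋 using Finset.induction_on with
  | empty => simp [rem]
  | insert T 𝕋 hn ih =>
    have h1 := ih ((Finset.subset_insert _ _).trans hT)
    set QQ := rem PP 𝕋 with hQQ
    have hQs : QQ ⊆ PP := Finset.filter_subset _ _
    have hrem : rem PP (insert T 𝕋) = QQ.filter (fun P => ¬ bl P T) := by
      ext P
      simp only [hQQ, rem, Finset.mem_filter, Finset.mem_insert, forall_eq_or_imp]
      tauto
    have hsplit := Finset.sum_filter_add_sum_filter_not QQ (fun P => bl P T) (term a b)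
    have hest : ‖∑ P ∈ QQ.filter (fun P => bl P T), term a b P‖ ≤
        6 * (√s1 * √s2 * √s3) * (2:ℝ) ^ T.k := by
      by_cases hTQ : T ∈ QQ
      · exact tree_est D (hcv.rem 𝕋) hs2 (z1.mono D.h1 hQs) (z2.mono D.h2 hQs)
          (z3.mono D.h3 hQs) hTQ
      · have : QQ.filter (fun P => bl P T) = ∅ := by
          rw [Finset.filter_eq_empty_iff]
          intro P hP hPT
          apply hTQ
          simp only [hQQ, rem, Finset.mem_filter] at hP ⊢
          exact ⟨hT (Finset.mem_insert_self _ _), fun T' hT' h => hP.2 T' hT' (bl_trans hPT h)⟩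
        rw [this]; simp; positivity
    rw [hrem, Finset.sum_insert hn]
    rw [← hsplit] at h1
    have := norm_add_le (∑ P ∈ QQ.filter (fun P => bl P T), term a b P)
      (∑ P ∈ QQ.filter (fun P => ¬ bl P T), term a b P)
    linarith

theorem rem_sub (PP 𝕋 : Finset Bitile) : rem PP 𝕋 ⊆ PP := by
  classical
  exact Finset.filter_subset _ _

theorem Sz_rem_rem {e : Tile → ℝ} (he : ∀ p, 0 ≤ e p) {PP 𝕋 𝕋' : Finset Bitile} (h : 𝕋 ⊆ 𝕋') {s : ℝ}
    (z : Sz e (rem PP 𝕋) s) : Sz e (rem PP 𝕋') s := z.mono he (rem_anti PP h)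

theorem one_step {a b : Tile → ℂ} {e1 e2 e3 : Tile → ℝ} (D : Dat a b e1 e2 e3)
    {E1 E2 E3 : ℝ} (hE1 : 0 < E1) (hE2 : 0 < E2) (hE3 : 0 < E3)
    (B1 : Bes e1 E1) (B2 : Bes e2 E2) (B3 : Bes e3 E3)
    {PP : Finset Bitile} (hcv : Cvx PP) {τ : ℝ} (hτ : 0 < τ)
    (z1 : Sz e1 PP (E1 * τ)) (z2 : Sz e2 PP (E2 * τ)) (z3 : Sz e3 PP (E3 * τ)) :
    ∃ QQ ⊆ PP, Cvx QQ ∧ Sz e1 QQ (E1 * (τ / 4)) ∧ Sz e2 QQ (E2 * (τ / 4)) ∧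
      Sz e3 QQ (E3 * (τ / 4)) ∧
      ‖∑ P ∈ PP, term a b P‖ ≤ ‖∑ P ∈ QQ, term a b P‖ + 288 * (√E1 * √E2 * √E3) * √τ := by
  classical
  have sel : ∀ (e : Tile → ℝ) (E : ℝ), (∀ p, 0 ≤ e p) → 0 < E → Bes e E →
      ∃ 𝕋 : Finset Bitile, 𝕋 ⊆ PP ∧ ∑ T ∈ 𝕋, (2:ℝ) ^ T.k ≤ 16 / τ ∧
        Sz e (rem PP 𝕋) (E * (τ / 4)) := by
    intro e E he hE hB
    obtain ⟨𝕋, h1, h2, h3⟩ := select e he hB (s := E * (τ / 4)) (by positivity) PP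
    refine ⟨𝕋, h1, ?_, h3⟩
    rw [le_div_iff₀ hτ]
    have : E * ((∑ T ∈ 𝕋, (2:ℝ) ^ T.k) * τ) ≤ E * 16 := by linarith
    exact le_of_mul_le_mul_left this hE
  obtain ⟨T1, a1, a2, a3⟩ := sel e1 E1 D.h1 hE1 B1
  obtain ⟨T2, b1, b2, b3⟩ := sel e2 E2 D.h2 hE2 B2
  obtain ⟨T3, c1, c2, c3⟩ := sel e3 E3 D.h3 hE3 B3
  have hT : T1 ∪ T2 ∪ T3 ⊆ PP := Finset.union_subset (Finset.union_subset a1 b1) c1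
  have hsum : ∑ T ∈ T1 ∪ T2 ∪ T3, (2:ℝ) ^ T.k ≤ 48 / τ := by
    have h1 : ∑ T ∈ T1 ∪ T2 ∪ T3, (2:ℝ) ^ T.k ≤
        ∑ T ∈ T1 ∪ T2, (2:ℝ) ^ T.k + ∑ T ∈ T3, (2:ℝ) ^ T.k := by
      rw [← Finset.sum_union_inter]
      exact le_add_of_nonneg_right (Finset.sum_nonneg fun _ _ => by positivity)
    have h2 : ∑ T ∈ T1 ∪ T2, (2:ℝ) ^ T.k ≤
        ∑ T ∈ T1, (2:ℝ) ^ T.k + ∑ T ∈ T2, (2:ℝ) ^ T.k := by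
      rw [← Finset.sum_union_inter]
      exact le_add_of_nonneg_right (Finset.sum_nonneg fun _ _ => by positivity)
    have : 48 / τ = 16 / τ + 16 / τ + 16 / τ := by ring
    linarith
  refine ⟨rem PP (T1 ∪ T2 ∪ T3), rem_sub _ _, hcv.rem _, Sz_rem_rem D.h1 ?_ a3,
    Sz_rem_rem D.h2 ?_ b3, Sz_rem_rem D.h3 ?_ c3, ?_⟩
  · intro x; simp; tauto
  · intro x; simp; tauto
  · intro x; simp; tauto
  · refine (removal D hcv (by positivity) z1 z2 z3 _ hT).trans ?_
    refine add_le_add le_rfl ?_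
    calc _ ≤ 6 * (√(E1 * τ) * √(E2 * τ) * √(E3 * τ)) * (48 / τ) := by gcongr
      _ = _ := by
        rw [Real.sqrt_mul' _ hτ.le, Real.sqrt_mul' _ hτ.le, Real.sqrt_mul' _ hτ.le]
        have := Real.mul_self_sqrt hτ.le
        have h2 : √τ * √τ * √τ * (48 / τ) = 48 * √τ := by rw [this]; field_simp
        linear_combination (6 * √E1 * √E2 * √E3) * h2

theorem iter {a b : Tile → ℂ} {e1 e2 e3 : Tile → ℝ} (D : Dat a b e1 e2 e3)
    {E1 E2 E3 : ℝ} (hE1 : 0 < E1) (hE2 : 0 < E2) (hE3 : 0 < E3)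
    (B1 : Bes e1 E1) (B2 : Bes e2 E2) (B3 : Bes e3 E3) (M : ℝ) (m : ℕ) :
    ∀ (PP : Finset Bitile) (_ : Cvx PP) (_ : ∑ P ∈ PP, (2:ℝ) ^ P.k ≤ M) {τ : ℝ} (_ : 0 < τ)
    (_ : Sz e1 PP (E1 * τ)) (_ : Sz e2 PP (E2 * τ)) (_ : Sz e3 PP (E3 * τ)),
    ‖∑ P ∈ PP, term a b P‖ ≤ 576 * (√E1 * √E2 * √E3) * √τ +
      (√E1 * √E2 * √E3) * (√τ) ^ 3 * M * (1 / 2) ^ m := by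
  induction m with
  | zero =>
    intro PP hcv hM τ hτ z1 z2 z3
    refine (norm_sum_le _ _).trans ?_
    have : ∑ P ∈ PP, ‖term a b P‖ ≤ (√E1 * √E2 * √E3) * (√τ) ^ 3 * ∑ P ∈ PP, (2:ℝ) ^ P.k := by
      rw [Finset.mul_sum]
      refine Finset.sum_le_sum fun P hP => (D.norm_term_le z1 hP).trans ?_
      have h := (Sz.sqrt_mul D.h2 D.h3 (by positivity) z2 z3).top P hP 0 (by norm_num)
      have h' := mul_le_mul_of_nonneg_left h (Real.sqrt_nonneg (E1 * τ))
      refine h'.trans (le_of_eq ?_)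
      rw [Real.sqrt_mul' _ hτ.le, Real.sqrt_mul' _ hτ.le, Real.sqrt_mul' _ hτ.le]
      ring
    have h2 : (√E1 * √E2 * √E3) * (√τ) ^ 3 * ∑ P ∈ PP, (2:ℝ) ^ P.k ≤
      (√E1 * √E2 * √E3) * (√τ) ^ 3 * M := by gcongr
    have h3 : 0 ≤ 576 * (√E1 * √E2 * √E3) * √τ := by positivity
    simp only [pow_zero, mul_one]
    linarith
  | succ m ih =>
    intro PP hcv hM τ hτ z1 z2 z3
    obtain ⟨QQ, hs, hc, y1, y2, y3, h⟩ := one_step D hE1 hE2 hE3 B1 B2 B3 hcv hτ z1 z2 z3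
    have hM0 : 0 ≤ M := le_trans (Finset.sum_nonneg fun _ _ => by positivity) hM
    have hM' : ∑ P ∈ QQ, (2:ℝ) ^ P.k ≤ M :=
      (Finset.sum_le_sum_of_subset_of_nonneg hs fun _ _ _ => by positivity).trans hM
    have := ih QQ hc hM' (τ := τ / 4) (by positivity) y1 y2 y3
    have e : √(τ / 4) = √τ / 2 := by
      rw [Real.sqrt_div hτ.le, show (4:ℝ) = 2 ^ 2 by norm_num, Real.sqrt_sq (by norm_num)]
    rw [e] at this
    have h5 : (√E1 * √E2 * √E3) * (√τ / 2) ^ 3 * M * (1 / 2) ^ m ≤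
        (√E1 * √E2 * √E3) * (√τ) ^ 3 * M * (1 / 2) ^ (m + 1) := by
      have : 0 ≤ (√E1 * √E2 * √E3) * (√τ) ^ 3 * M * (1 / 2) ^ m := by positivity
      have e2 : (√E1 * √E2 * √E3) * (√τ / 2) ^ 3 * M * (1 / 2) ^ m =
        ((√E1 * √E2 * √E3) * (√τ) ^ 3 * M * (1 / 2) ^ m) / 8 := by ring
      rw [e2, pow_succ (1 / 2 : ℝ) m]; linarith
    linarith

theorem comb_main {a b : Tile → ℂ} {e1 e2 e3 : Tile → ℝ} (D : Dat a b e1 e2 e3)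
    {E1 E2 E3 : ℝ} (hE1 : 0 < E1) (hE2 : 0 < E2) (hE3 : 0 < E3)
    (B1 : Bes e1 E1) (B2 : Bes e2 E2) (B3 : Bes e3 E3)
    {PP : Finset Bitile} (hcv : Cvx PP) {τ : ℝ} (hτ : 0 < τ)
    (z1 : Sz e1 PP (E1 * τ)) (z2 : Sz e2 PP (E2 * τ)) (z3 : Sz e3 PP (E3 * τ)) :
    ‖∑ P ∈ PP, term a b P‖ ≤ 576 * (√E1 * √E2 * √E3) * √τ := by
  have h := fun m => iter D hE1 hE2 hE3 B1 B2 B3 _ m PP hcv le_rfl hτ z1 z2 z3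
  have ht : Filter.Tendsto (fun m : ℕ => 576 * (√E1 * √E2 * √E3) * √τ +
      (√E1 * √E2 * √E3) * (√τ) ^ 3 * (∑ P ∈ PP, (2:ℝ) ^ P.k) * (1 / 2) ^ m) Filter.atTop
      (nhds (576 * (√E1 * √E2 * √E3) * √τ +
      (√E1 * √E2 * √E3) * (√τ) ^ 3 * (∑ P ∈ PP, (2:ℝ) ^ P.k) * 0)) :=
    ((_root_.tendsto_pow_atTop_nhds_zero_of_lt_one (by norm_num) (by norm_num)).const_mul _).const_add _
  have := ge_of_tendsto' ht h
  simpa using this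

end

section

theorem walsh_zero (x : ℝ) : walsh 0 x = if 0 ≤ x ∧ x < 1 then 1 else 0 := by
  rw [walsh]; simp

theorem walsh_even (l : ℕ) (x : ℝ) : walsh (2 * l) x = walsh l (2 * x) + walsh l (2 * x - 1) := by
  rcases Nat.eq_zero_or_pos l with rfl | h
  · simp only [mul_zero, walsh_zero]
    split_ifs with h1 h2 h3 h2 h3 h4 h5 <;> grind
  · rw [walsh, dif_neg (by omega), if_pos (by omega), show 2 * l / 2 = l by omega]

theorem walsh_odd (l : ℕ) (x : ℝ) :
    walsh (2 * l + 1) x = walsh l (2 * x) - walsh l (2 * x - 1) := by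
  rw [walsh, dif_neg (by omega), if_neg (by omega), show (2 * l + 1) / 2 = l by omega]

theorem walsh_out (l : ℕ) : ∀ x : ℝ, ¬ (0 ≤ x ∧ x < 1) → walsh l x = 0 := by
  induction l using Nat.strong_induction_on with
  | _ l ih =>
    intro x hx
    rcases Nat.eq_zero_or_pos l with rfl | h
    · rw [walsh_zero, if_neg hx]
    · have h1 : walsh (l / 2) (2 * x) = 0 := ih _ (by omega) _ (by
        rintro ⟨h1, h2⟩; exact hx ⟨by linarith, by linarith⟩)
      have h2 : walsh (l / 2) (2 * x - 1) = 0 := ih _ (by omega) _ (by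
        rintro ⟨h1, h2⟩; exact hx ⟨by linarith, by linarith⟩)
      rcases Nat.even_or_odd' l with ⟨m, rfl | rfl⟩
      · rw [show 2 * m / 2 = m by omega] at h1 h2
        rw [walsh_even, h1, h2]; simp
      · rw [show (2 * m + 1) / 2 = m by omega] at h1 h2
        rw [walsh_odd, h1, h2]; simp

theorem walsh_sq (l : ℕ) : ∀ x : ℝ, (0 ≤ x ∧ x < 1) → walsh l x * walsh l x = 1 := by
  induction l using Nat.strong_induction_on with
  | _ l ih =>
    intro x hx
    rcases Nat.eq_zero_or_pos l with rfl | h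
    · rw [walsh_zero, if_pos hx]; simp
    · have key : ∃ s : ℝ, s * s = 1 ∧ ((walsh (l / 2) (2 * x) = s ∧ walsh (l / 2) (2 * x - 1) = 0) ∨
          (walsh (l / 2) (2 * x) = 0 ∧ walsh (l / 2) (2 * x - 1) = s)) := by
        by_cases hh : 2 * x < 1
        · exact ⟨_, ih _ (by omega) (2 * x) ⟨by linarith, hh⟩,
            Or.inl ⟨rfl, walsh_out _ _ (by intro h; linarith [h.1])⟩⟩
        · exact ⟨_, ih _ (by omega) (2 * x - 1) ⟨by linarith, by linarith⟩,
            Or.inr ⟨walsh_out _ _ (by intro h; linarith [h.2]), rfl⟩⟩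
      obtain ⟨s, hs, h1⟩ := key
      rcases Nat.even_or_odd' l with ⟨m, rfl | rfl⟩
      · rw [show 2 * m / 2 = m by omega] at h1
        rw [walsh_even]; rcases h1 with ⟨h1, h2⟩ | ⟨h1, h2⟩ <;> rw [h1, h2] <;> simpa using hs
      · rw [show (2 * m + 1) / 2 = m by omega] at h1
        rw [walsh_odd]; rcases h1 with ⟨h1, h2⟩ | ⟨h1, h2⟩ <;> rw [h1, h2] <;> simpa using hs

theorem walsh_meas (l : ℕ) : Measurable (walsh l) := by
  induction l using Nat.strong_induction_on with
  | _ l ih =>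
    rcases Nat.eq_zero_or_pos l with rfl | h
    · have : walsh 0 = fun x => if 0 ≤ x ∧ x < 1 then (1:ℝ) else 0 := funext walsh_zero
      rw [this]
      exact Measurable.ite (measurableSet_Ico (a := (0:ℝ)) (b := 1)) measurable_const measurable_const
    · rcases Nat.even_or_odd' l with ⟨m, rfl | rfl⟩
      · rw [show walsh (2 * m) = fun x => walsh m (2 * x) + walsh m (2 * x - 1) from
          funext (walsh_even m)]
        have := ih m (by omega)
        exact (this.comp (by fun_prop)).add (this.comp (by fun_prop))
      · rw [show walsh (2 * m + 1) = fun x => walsh m (2 * x) - walsh m (2 * x - 1) from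
          funext (walsh_odd m)]
        have := ih m (by omega)
        exact (this.comp (by fun_prop)).sub (this.comp (by fun_prop))

theorem mem_timeI (p : Tile) (x : ℝ) :
    x ∈ p.timeI ↔ (0 ≤ (2:ℝ) ^ (-p.k) * x - p.n ∧ (2:ℝ) ^ (-p.k) * x - p.n < 1) := by
  have h : (0:ℝ) < (2:ℝ) ^ p.k := by positivity
  rw [Tile.timeI, mem_Ico, zpow_neg, ← div_eq_inv_mul, sub_nonneg, le_div_iff₀ h,
    sub_lt_iff_lt_add, div_lt_iff₀ h]
  constructor <;> rintro ⟨h1, h2⟩ <;> constructor <;> linarith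

theorem wp_out (p : Tile) {x : ℝ} (hx : x ∉ p.timeI) : p.wp x = 0 := by
  rw [mem_timeI] at hx
  rw [Tile.wp, walsh_out _ _ hx, mul_zero]

theorem wp_sq (p : Tile) {x : ℝ} (hx : x ∈ p.timeI) : p.wp x * p.wp x = (2:ℝ) ^ (-p.k) := by
  rw [mem_timeI] at hx
  rw [Tile.wp, mul_mul_mul_comm, walsh_sq _ _ hx, Real.mul_self_sqrt (by positivity), mul_one]

theorem wp_meas (p : Tile) : Measurable p.wp :=
  measurable_const.mul ((walsh_meas _).comp (by fun_prop))

theorem timeI_meas (p : Tile) : MeasurableSet p.timeI := measurableSet_Ico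

theorem timeI_vol (p : Tile) : volume p.timeI = ENNReal.ofReal ((2:ℝ) ^ p.k) := by
  rw [Tile.timeI, Real.volume_Ico]; congr 1; ring

theorem wp_sq_eq (p : Tile) (x : ℝ) :
    p.wp x * p.wp x = p.timeI.indicator (fun _ => (2:ℝ) ^ (-p.k)) x := by
  by_cases hx : x ∈ p.timeI
  · rw [indicator_of_mem hx, wp_sq p hx]
  · rw [indicator_of_notMem hx, wp_out p hx, mul_zero]

theorem wp_abs_le (p : Tile) (x : ℝ) : |p.wp x| ≤ √((2:ℝ) ^ (-p.k)) := by
  apply Real.abs_le_sqrt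
  rw [pow_two, wp_sq_eq]
  exact indicator_le_self' (fun _ _ => by positivity) x

theorem wp_sqrt2 (k : ℤ) (n l : ℕ) (x : ℝ) :
    Tile.wp ⟨k - 1, n, l⟩ x = √2 * (√((2:ℝ) ^ (-k)) * walsh l (2 * ((2:ℝ) ^ (-k) * x) - n)) := by
  have e : (2:ℝ) ^ (-(k - 1)) = 2 * (2:ℝ) ^ (-k) := by
    rw [neg_sub, sub_eq_add_neg, zpow_add₀ (by norm_num)]; simp
  simp only [Tile.wp]
  rw [e, Real.sqrt_mul (by norm_num), mul_assoc 2, mul_assoc]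

theorem wp_even (k : ℤ) (n l : ℕ) (x : ℝ) : Tile.wp ⟨k, n, 2 * l⟩ x =
    (Tile.wp ⟨k - 1, 2 * n, l⟩ x + Tile.wp ⟨k - 1, 2 * n + 1, l⟩ x) / √2 := by
  rw [wp_sqrt2, wp_sqrt2, ← mul_add, mul_div_cancel_left₀ _ (by positivity), ← mul_add]
  simp only [Tile.wp]
  rw [walsh_even]; push_cast; ring_nf

theorem wp_odd (k : ℤ) (n l : ℕ) (x : ℝ) : Tile.wp ⟨k, n, 2 * l + 1⟩ x =
    (Tile.wp ⟨k - 1, 2 * n, l⟩ x - Tile.wp ⟨k - 1, 2 * n + 1, l⟩ x) / √2 := by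
  rw [wp_sqrt2, wp_sqrt2, ← mul_sub, mul_div_cancel_left₀ _ (by positivity), ← mul_sub]
  simp only [Tile.wp]
  rw [walsh_odd]; push_cast; ring_nf

theorem timeI_disj (k : ℤ) {n m : ℕ} (l l' : ℕ) (h : n ≠ m) {x : ℝ}
    (hx : x ∈ Tile.timeI ⟨k, n, l⟩) : x ∉ Tile.timeI ⟨k, m, l'⟩ := by
  rw [mem_timeI] at hx ⊢
  rintro ⟨h1, h2⟩
  obtain ⟨h3, h4⟩ := hx
  simp only at h1 h2 h3 h4
  have a : (n:ℝ) < m + 1 := by linarith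
  have b : (m:ℝ) < n + 1 := by linarith
  have a' : n < m + 1 := by exact_mod_cast a
  have b' : m < n + 1 := by exact_mod_cast b
  omega

theorem timeI_sub (k : ℤ) (n : ℕ) (l l' : ℕ) (d : ℕ) :
    Tile.timeI ⟨k, n, l⟩ ⊆ Tile.timeI ⟨k + d, n / 2 ^ d, l'⟩ := by
  intro x hx
  have hp : (0:ℝ) < (2:ℝ) ^ k := by positivity
  simp only [Tile.timeI, mem_Ico] at hx ⊢
  rw [zpow_add₀ (by norm_num), zpow_natCast]
  have h1 : 2 ^ d * (n / 2 ^ d) ≤ n := Nat.mul_div_le _ _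
  have h2 : n < 2 ^ d * (n / 2 ^ d + 1) := by
    have := Nat.lt_div_mul_add (a := n) (b := 2 ^ d) (by positivity)
    rw [mul_add, mul_one, mul_comm]; exact this
  have h1' : (2:ℝ) ^ d * ((n / 2 ^ d : ℕ) : ℝ) ≤ n := by exact_mod_cast h1
  have h2' : (n:ℝ) + 1 ≤ (2:ℝ) ^ d * (((n / 2 ^ d : ℕ) : ℝ) + 1) := by exact_mod_cast h2
  constructor
  · rw [mul_assoc]; exact (mul_le_mul_of_nonneg_left h1' hp.le).trans hx.1
  · rw [mul_assoc]; exact hx.2.trans_le (mul_le_mul_of_nonneg_left h2' hp.le)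

theorem wp_restrict1 (k : ℤ) (n l : ℕ) : ∃ c : ℝ, ∀ x ∈ Tile.timeI ⟨k, n, 0⟩,
    Tile.wp ⟨k + 1, n / 2, l⟩ x = c * Tile.wp ⟨k, n, l / 2⟩ x := by
  rcases Nat.even_or_odd' n with ⟨m, rfl | rfl⟩ <;> rcases Nat.even_or_odd' l with ⟨a, rfl | rfl⟩
  · refine ⟨1 / √2, fun x hx => ?_⟩
    rw [wp_even, show 2 * m / 2 = m by omega, show 2 * a / 2 = a by omega, add_sub_cancel_right,
      wp_out ⟨k, 2 * m + 1, a⟩ (timeI_disj k _ _ (by omega) hx)]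
    ring
  · refine ⟨1 / √2, fun x hx => ?_⟩
    rw [wp_odd, show 2 * m / 2 = m by omega, show (2 * a + 1) / 2 = a by omega, add_sub_cancel_right,
      wp_out ⟨k, 2 * m + 1, a⟩ (timeI_disj k _ _ (by omega) hx)]
    ring
  · refine ⟨1 / √2, fun x hx => ?_⟩
    rw [wp_even, show (2 * m + 1) / 2 = m by omega, show 2 * a / 2 = a by omega,
      add_sub_cancel_right, wp_out ⟨k, 2 * m, a⟩ (timeI_disj k _ _ (by omega) hx)]
    ring
  · refine ⟨-1 / √2, fun x hx => ?_⟩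
    rw [wp_odd, show (2 * m + 1) / 2 = m by omega, show (2 * a + 1) / 2 = a by omega,
      add_sub_cancel_right, wp_out ⟨k, 2 * m, a⟩ (timeI_disj k _ _ (by omega) hx)]
    ring

theorem wp_restrict (k : ℤ) (n : ℕ) (d : ℕ) : ∀ l : ℕ, ∃ c : ℝ, ∀ x ∈ Tile.timeI ⟨k, n, 0⟩,
    Tile.wp ⟨k + d, n / 2 ^ d, l⟩ x = c * Tile.wp ⟨k, n, l / 2 ^ d⟩ x := by
  induction d with
  | zero => intro l; exact ⟨1, fun x _ => by simp⟩
  | succ d ih =>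
    intro l
    obtain ⟨c, hc⟩ := ih (l / 2)
    obtain ⟨c', hc'⟩ := wp_restrict1 (k + d) (n / 2 ^ d) l
    refine ⟨c' * c, fun x hx => ?_⟩
    have h1 := hc' x (timeI_sub k n 0 0 d hx)
    rw [hc x hx, Nat.div_div_eq_div_mul, Nat.div_div_eq_div_mul, ← pow_succ, ← pow_succ'] at h1
    rw [mul_assoc, ← h1]; push_cast; rw [add_assoc]

theorem wp_int_mul (p q : Tile) : Integrable (fun x => p.wp x * q.wp x) := by
  have h : Integrable (p.timeI.indicator (fun _ => √((2:ℝ) ^ (-p.k)) * √((2:ℝ) ^ (-q.k)))) := by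
    rw [integrable_indicator_iff (timeI_meas p)]
    exact integrableOn_const (by rw [timeI_vol]; exact ENNReal.ofReal_ne_top)
  refine h.mono' ((wp_meas p).mul (wp_meas q)).aestronglyMeasurable (Filter.Eventually.of_forall ?_)
  intro x
  by_cases hx : x ∈ p.timeI
  · rw [indicator_of_mem hx, norm_mul]
    exact mul_le_mul (wp_abs_le p x) (wp_abs_le q x) (norm_nonneg _) (Real.sqrt_nonneg _)
  · rw [indicator_of_notMem hx, wp_out p hx]; simp

/-- inner product of wave packets -/
def ip (p q : Tile) : ℝ := ∫ x, p.wp x * q.wp x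

theorem ip_self (p : Tile) : ip p p = 1 := by
  simp only [ip, wp_sq_eq]
  rw [integral_indicator (timeI_meas p), setIntegral_const, measureReal_def, timeI_vol,
    ENNReal.toReal_ofReal (by positivity), smul_eq_mul, ← zpow_add₀ (by norm_num)]
  simp

theorem ip_halves (k : ℤ) (n : ℕ) (s s' : ℝ) (l l' a a' : ℕ)
    (h : ∀ x, Tile.wp ⟨k, n, l⟩ x =
      (Tile.wp ⟨k - 1, 2 * n, a⟩ x + s * Tile.wp ⟨k - 1, 2 * n + 1, a⟩ x) / √2)
    (h' : ∀ x, Tile.wp ⟨k, n, l'⟩ x =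
      (Tile.wp ⟨k - 1, 2 * n, a'⟩ x + s' * Tile.wp ⟨k - 1, 2 * n + 1, a'⟩ x) / √2) :
    ip ⟨k, n, l⟩ ⟨k, n, l'⟩ = (ip ⟨k - 1, 2 * n, a⟩ ⟨k - 1, 2 * n, a'⟩ +
      s * s' * ip ⟨k - 1, 2 * n + 1, a⟩ ⟨k - 1, 2 * n + 1, a'⟩) / 2 := by
  have e : ∀ x, Tile.wp ⟨k, n, l⟩ x * Tile.wp ⟨k, n, l'⟩ x =
      (1 / 2) * (Tile.wp ⟨k - 1, 2 * n, a⟩ x * Tile.wp ⟨k - 1, 2 * n, a'⟩ x) +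
      (s * s' / 2) * (Tile.wp ⟨k - 1, 2 * n + 1, a⟩ x * Tile.wp ⟨k - 1, 2 * n + 1, a'⟩ x) := by
    intro x
    rw [h, h']
    have h2 : √2 * √2 = (2:ℝ) := Real.mul_self_sqrt (by norm_num)
    rw [div_mul_div_comm, h2]
    by_cases hx : x ∈ Tile.timeI ⟨k - 1, 2 * n, 0⟩
    · rw [wp_out ⟨k - 1, 2 * n + 1, a⟩ (timeI_disj _ _ _ (by omega) hx),
        wp_out ⟨k - 1, 2 * n + 1, a'⟩ (timeI_disj _ _ _ (by omega) hx)]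
      ring
    · rw [wp_out ⟨k - 1, 2 * n, a⟩ hx, wp_out ⟨k - 1, 2 * n, a'⟩ hx]
      ring
  simp only [ip, e]
  rw [integral_add ((wp_int_mul _ _).const_mul _) ((wp_int_mul _ _).const_mul _),
    integral_const_mul, integral_const_mul]
  ring

theorem wp_split (l : ℕ) : ∃ s : ℝ, s * s = 1 ∧ s = 1 - 2 * ((l % 2 : ℕ) : ℝ) ∧
    ∀ k n x, Tile.wp ⟨k, n, l⟩ x =
      (Tile.wp ⟨k - 1, 2 * n, l / 2⟩ x + s * Tile.wp ⟨k - 1, 2 * n + 1, l / 2⟩ x) / √2 := by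
  rcases Nat.even_or_odd' l with ⟨a, rfl | rfl⟩
  · refine ⟨1, by norm_num, by simp, fun k n x => ?_⟩
    rw [wp_even, show 2 * a / 2 = a by omega]; ring
  · refine ⟨-1, by norm_num, by rw [show (2 * a + 1) % 2 = 1 by omega]; norm_num, fun k n x => ?_⟩
    rw [wp_odd, show (2 * a + 1) / 2 = a by omega]; ring

theorem ip_same (m : ℕ) : ∀ (l l' : ℕ) (k : ℤ) (n : ℕ), l + l' ≤ m → l ≠ l' →
    ip ⟨k, n, l⟩ ⟨k, n, l'⟩ = 0 := by
  induction m with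
  | zero => intro l l' k n h h'; omega
  | succ m ih =>
    intro l l' k n h hne
    obtain ⟨s, h1, h2, h3⟩ := wp_split l
    obtain ⟨s', g1, g2, g3⟩ := wp_split l'
    rw [ip_halves k n s s' l l' _ _ (h3 k n) (g3 k n)]
    by_cases hh : l / 2 = l' / 2
    · rw [hh, ip_self, ip_self]
      rw [h2, g2]
      have : (l % 2 = 0 ∧ l' % 2 = 1) ∨ (l % 2 = 1 ∧ l' % 2 = 0) := by omega
      rcases this with ⟨e1, e2⟩ | ⟨e1, e2⟩ <;> rw [e1, e2] <;> norm_num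
    · rw [ih _ _ _ _ (by omega) hh, ih _ _ _ _ (by omega) hh]; simp

theorem ip_comm (p q : Tile) : ip p q = ip q p := by
  simp only [ip, mul_comm]

theorem ip_zero_aux (p q : Tile) (d : ℕ) (hd : q.k = p.k + d) (h : ¬ tl p q) : ip p q = 0 := by
  obtain ⟨k, n, l⟩ := p
  obtain ⟨k', n', l'⟩ := q
  simp only at hd
  subst hd
  by_cases hn : n / 2 ^ d = n'
  · subst hn
    obtain ⟨c, hc⟩ := wp_restrict k n d l'
    have hl : l ≠ l' / 2 ^ d := fun hl => h ⟨d, rfl, rfl, hl.symm⟩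
    have e : ∀ x, Tile.wp ⟨k, n, l⟩ x * Tile.wp ⟨k + d, n / 2 ^ d, l'⟩ x =
        c * (Tile.wp ⟨k, n, l⟩ x * Tile.wp ⟨k, n, l' / 2 ^ d⟩ x) := by
      intro x
      by_cases hx : x ∈ Tile.timeI ⟨k, n, 0⟩
      · rw [hc x hx]; ring
      · rw [wp_out ⟨k, n, l⟩ hx]; simp
    simp only [ip, e]
    rw [integral_const_mul]
    have := ip_same _ l _ k n le_rfl hl
    rw [ip] at this
    rw [this, mul_zero]
  · have e : ∀ x, Tile.wp ⟨k, n, l⟩ x * Tile.wp ⟨k + d, n', l'⟩ x = 0 := by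
      intro x
      by_cases hx : x ∈ Tile.timeI ⟨k, n, l⟩
      · rw [wp_out ⟨k + d, n', l'⟩ (timeI_disj _ 0 _ hn (timeI_sub k n l 0 d hx))]; simp
      · rw [wp_out ⟨k, n, l⟩ hx]; simp
    simp only [ip, e, integral_zero]

theorem ip_zero (p q : Tile) (h : ¬ tl p q) (h' : ¬ tl q p) : ip p q = 0 := by
  rcases le_total p.k q.k with hk | hk
  · exact ip_zero_aux p q (q.k - p.k).toNat (by omega) h
  · rw [ip_comm]; exact ip_zero_aux q p (p.k - q.k).toNat (by omega) h'

end

section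

/-- admissible functions -/
structure Adm (f : ℝ → ℂ) (E : Set ℝ) : Prop where
  meas : Measurable f
  measE : MeasurableSet E
  fin : volume E < ∞
  bd : ∀ x, ‖f x‖ ≤ E.indicator 1 x

theorem Adm.le_one {f : ℝ → ℂ} {E : Set ℝ} (h : Adm f E) (x : ℝ) : ‖f x‖ ≤ 1 :=
  (h.bd x).trans (indicator_le_self' (fun _ _ => by simp) x)

theorem Adm.out {f : ℝ → ℂ} {E : Set ℝ} (h : Adm f E) {x : ℝ} (hx : x ∉ E) : f x = 0 := by
  have := h.bd x
  rw [indicator_of_notMem hx] at this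
  exact norm_le_zero_iff.1 this

theorem Adm.inter {f : ℝ → ℂ} {E : Set ℝ} (h : Adm f E) {J : Set ℝ} (hJ : MeasurableSet J) :
    Adm (J.indicator f) (E ∩ J) where
  meas := h.meas.indicator hJ
  measE := h.measE.inter hJ
  fin := (measure_mono inter_subset_left).trans_lt h.fin
  bd := by
    intro x
    by_cases hx : x ∈ J
    · rw [indicator_of_mem hx]
      refine (h.bd x).trans (le_of_eq ?_)
      by_cases hE : x ∈ E
      · rw [indicator_of_mem hE, indicator_of_mem (mem_inter hE hx)]
      · rw [indicator_of_notMem hE, indicator_of_notMem (fun h => hE h.1)]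
    · rw [indicator_of_notMem hx]; simp [indicator, mem_inter_iff, hx]

theorem Adm.integrable {f : ℝ → ℂ} {E : Set ℝ} (h : Adm f E) : Integrable f := by
  have h1 : Integrable (E.indicator (1 : ℝ → ℝ)) := by
    rw [integrable_indicator_iff h.measE]
    exact integrableOn_const h.fin.ne
  exact h1.mono' h.meas.aestronglyMeasurable (Filter.Eventually.of_forall h.bd)

theorem Adm.int_wp {f : ℝ → ℂ} {E : Set ℝ} (h : Adm f E) (p : Tile) :
    Integrable (fun x => f x * (p.wp x : ℂ)) := by
  refine h.integrable.mul_bdd (c := √((2:ℝ) ^ (-p.k))) ?_ (Filter.Eventually.of_forall ?_)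
  · exact (Complex.measurable_ofReal.comp (wp_meas p)).aestronglyMeasurable
  · intro x; rw [Complex.norm_real]; exact wp_abs_le p x

theorem Adm.coef_even {f : ℝ → ℂ} {E : Set ℝ} (h : Adm f E) (k : ℤ) (n l : ℕ) :
    coef f ⟨k, n, 2 * l⟩ = (coef f ⟨k - 1, 2 * n, l⟩ + coef f ⟨k - 1, 2 * n + 1, l⟩) / (√2 : ℝ) := by
  simp only [coef]
  rw [← integral_add (h.int_wp _) (h.int_wp _), ← integral_div]
  congr 1; ext x
  rw [wp_even]; push_cast; ring

theorem Adm.coef_odd {f : ℝ → ℂ} {E : Set ℝ} (h : Adm f E) (k : ℤ) (n l : ℕ) :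
    coef f ⟨k, n, 2 * l + 1⟩ =
      (coef f ⟨k - 1, 2 * n, l⟩ - coef f ⟨k - 1, 2 * n + 1, l⟩) / (√2 : ℝ) := by
  simp only [coef]
  rw [← integral_sub (h.int_wp _) (h.int_wp _), ← integral_div]
  congr 1; ext x
  rw [wp_odd]; push_cast; ring

theorem wp_memLp (p : Tile) : MemLp (fun x => (p.wp x : ℂ)) 2 := by
  have hm : AEStronglyMeasurable (fun x => (p.wp x : ℂ)) volume :=
    (Complex.measurable_ofReal.comp (wp_meas p)).aestronglyMeasurable
  rw [memLp_two_iff_integrable_sq_norm hm]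
  refine (wp_int_mul p p).congr (Filter.Eventually.of_forall fun x => ?_)
  simp only [Complex.norm_real, Real.norm_eq_abs, sq_abs]
  ring

theorem Adm.memLp {f : ℝ → ℂ} {E : Set ℝ} (h : Adm f E) : MemLp f 2 := by
  rw [memLp_two_iff_integrable_sq_norm h.meas.aestronglyMeasurable]
  refine h.integrable.norm.mono' (h.meas.norm.pow_const 2).aestronglyMeasurable
    (Filter.Eventually.of_forall fun x => ?_)
  rw [Real.norm_of_nonneg (by positivity), pow_two]
  exact mul_le_of_le_one_left (norm_nonneg _) (h.le_one x)

theorem Adm.int_sq {f : ℝ → ℂ} {E : Set ℝ} (h : Adm f E) : ∫ x, ‖f x‖ ^ 2 ≤ (volume E).toReal := by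
  have h1 : ∫ x, E.indicator (1 : ℝ → ℝ) x = (volume E).toReal := by
    rw [integral_indicator h.measE]; simp [measureReal_def]
  rw [← h1]
  refine integral_mono_of_nonneg (Filter.Eventually.of_forall fun x => by positivity) ?_
    (Filter.Eventually.of_forall fun x => ?_)
  · rw [integrable_indicator_iff h.measE]; exact integrableOn_const h.fin.ne
  · refine le_trans ?_ (h.bd x)
    simp only [pow_two]
    exact mul_le_of_le_one_left (norm_nonneg _) (h.le_one x)

/-- wave packets in `L²` -/
def wpL (p : Tile) : Lp ℂ 2 (volume : Measure ℝ) := (wp_memLp p).toLp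

theorem inner_wpL {f : ℝ → ℂ} (hf : MemLp f 2) (p : Tile) :
    inner ℂ (wpL p) (hf.toLp f) = coef f p := by
  rw [L2.inner_def, coef]
  refine integral_congr_ae ?_
  filter_upwards [(wp_memLp p).coeFn_toLp, hf.coeFn_toLp] with x h1 h2
  rw [wpL, h1, h2]
  simp

theorem wpL_orth (p q : Tile) : inner ℂ (wpL p) (wpL q) = (ip p q : ℂ) := by
  have := inner_wpL (wp_memLp q) p
  rw [wpL, wpL] at *
  rw [this, coef, ip, ← integral_complex_ofReal]
  congr 1; ext x; push_cast; ring

theorem Adm.bessel {f : ℝ → ℂ} {E : Set ℝ} (h : Adm f E) (𝔭 : Finset Tile)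
    (hp : ∀ p ∈ 𝔭, ∀ q ∈ 𝔭, p ≠ q → ¬ tl p q) :
    ∑ p ∈ 𝔭, ‖coef f p‖ ^ 2 ≤ (volume E).toReal := by
  classical
  have ho : Orthonormal ℂ (fun p : 𝔭 => wpL p.1) := by
    rw [orthonormal_iff_ite]
    intro p q
    rw [wpL_orth]
    split_ifs with hpq
    · rw [hpq, ip_self]; simp
    · have hne : p.1 ≠ q.1 := fun e => hpq (Subtype.ext e)
      rw [ip_zero _ _ (hp p.1 p.2 q.1 q.2 hne) (hp q.1 q.2 p.1 p.2 hne.symm)]; simp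
  have hb := ho.sum_inner_products_le (h.memLp.toLp f) (s := Finset.univ)
  simp only [inner_wpL] at hb
  rw [← Finset.sum_coe_sort]
  refine hb.trans (le_trans (le_of_eq ?_) h.int_sq)
  have h1 : ((‖h.memLp.toLp f‖ ^ 2 : ℝ) : ℂ) = ((∫ x, ‖f x‖ ^ 2 : ℝ) : ℂ) := by
    have := inner_self_eq_norm_sq_to_K (𝕜 := ℂ) (h.memLp.toLp f)
    rw [L2.inner_def] at this
    push_cast
    rw [← integral_complex_ofReal]
    refine this.symm.trans (integral_congr_ae ?_)
    filter_upwards [h.memLp.coeFn_toLp] with x hx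
    rw [hx, inner_self_eq_norm_sq_to_K]
    simp
  exact_mod_cast h1

theorem coef_indicator {f : ℝ → ℂ} {J : Set ℝ} {p : Tile} (hJ : p.timeI ⊆ J) :
    coef (J.indicator f) p = coef f p := by
  simp only [coef]
  congr 1; ext x
  by_cases hx : x ∈ p.timeI
  · rw [indicator_of_mem (hJ hx)]
  · rw [wp_out p hx]; simp

theorem Adm.bessel_loc {f : ℝ → ℂ} {E : Set ℝ} (h : Adm f E) {J : Set ℝ} (hJ : MeasurableSet J)
    (𝔭 : Finset Tile)
    (hp : ∀ p ∈ 𝔭, ∀ q ∈ 𝔭, p ≠ q → ¬ tl p q) (hs : ∀ p ∈ 𝔭, p.timeI ⊆ J) :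
    ∑ p ∈ 𝔭, ‖coef f p‖ ^ 2 ≤ (volume (E ∩ J)).toReal := by
  refine le_trans (le_of_eq ?_) ((h.inter hJ).bessel 𝔭 hp)
  exact Finset.sum_congr rfl fun p hp => by rw [coef_indicator (hs p hp)]

theorem coef_zero {f : ℝ → ℂ} {p : Tile} (hJ : ∀ x ∈ p.timeI, f x = 0) : coef f p = 0 := by
  simp only [coef]
  rw [← integral_zero ℝ ℂ]
  congr 1; ext x
  by_cases hx : x ∈ p.timeI
  · rw [hJ x hx, zero_mul]
  · rw [wp_out p hx]; simp

/-- sum over vertically dilated tiles, written as time subtiles -/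
def dsum {A : Type*} [AddCommMonoid A] (L : ℕ) (g : Tile → A) (p : Tile) : A :=
  ∑ r ∈ Finset.range (2 ^ L), g ⟨p.k - L, 2 ^ L * p.n + r, p.l⟩

theorem dsum_time {A : Type*} [AddCommMonoid A] (L : ℕ) (g : Tile → A) (k : ℤ) (n l : ℕ) :
    dsum (L + 1) g ⟨k, n, l⟩ = dsum L g ⟨k - 1, 2 * n, l⟩ + dsum L g ⟨k - 1, 2 * n + 1, l⟩ := by
  simp only [dsum]
  rw [pow_succ, mul_two, Finset.sum_range_add]
  congr 1
  · refine Finset.sum_congr rfl fun r _ => ?_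
    congr 2
    · push_cast; ring
    · ring
  · refine Finset.sum_congr rfl fun r _ => ?_
    congr 2
    · push_cast; ring
    · ring

theorem dsum_freq {A : Type*} [AddCommMonoid A] (L : ℕ) (g : Tile → A)
    (hg : ∀ k n l, g ⟨k - 1, 2 * n, l⟩ + g ⟨k - 1, 2 * n + 1, l⟩ =
      g ⟨k, n, 2 * l⟩ + g ⟨k, n, 2 * l + 1⟩) : ∀ (k : ℤ) (n l : ℕ),
    dsum (L + 1) g ⟨k, n, l⟩ = dsum L g ⟨k, n, 2 * l⟩ + dsum L g ⟨k, n, 2 * l + 1⟩ := by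
  induction L with
  | zero => intro k n l; rw [dsum_time]; simp [dsum, hg]
  | succ L ih =>
    intro k n l
    rw [dsum_time, ih, ih, dsum_time L g k n (2 * l), dsum_time L g k n (2 * l + 1)]
    abel

theorem sqrt2_sq : ((√2 : ℝ) : ℂ) * ((√2 : ℝ) : ℂ) = 2 := by
  rw [← Complex.ofReal_mul, Real.mul_self_sqrt (by norm_num)]; simp

theorem beta_rel {f g : ℝ → ℂ} {E F : Set ℝ} (hf : Adm f E) (hg : Adm g F) (k : ℤ) (n l : ℕ) :
    coef f ⟨k - 1, 2 * n, l⟩ * coef g ⟨k - 1, 2 * n, l⟩ +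
      coef f ⟨k - 1, 2 * n + 1, l⟩ * coef g ⟨k - 1, 2 * n + 1, l⟩ =
    coef f ⟨k, n, 2 * l⟩ * coef g ⟨k, n, 2 * l⟩ +
      coef f ⟨k, n, 2 * l + 1⟩ * coef g ⟨k, n, 2 * l + 1⟩ := by
  rw [hf.coef_even, hf.coef_odd, hg.coef_even, hg.coef_odd, div_mul_div_comm, div_mul_div_comm,
    sqrt2_sq]
  ring

theorem dat_of {f1 f2 f3 : ℝ → ℂ} {E2 E3 : Set ℝ} (h2 : Adm f2 E2) (h3 : Adm f3 E3) (L : ℕ) :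
    Dat (coef f1) (dsum L (fun p => coef f2 p * coef f3 p)) (fun p => ‖coef f1 p‖ ^ 2)
      (dsum (L + 1) (fun p => ‖coef f2 p‖ ^ 2)) (dsum (L + 1) (fun p => ‖coef f3 p‖ ^ 2)) where
  ha := fun p => le_rfl
  h2 := fun p => Finset.sum_nonneg fun _ _ => by positivity
  h3 := fun p => Finset.sum_nonneg fun _ _ => by positivity
  hb1 := by
    intro k n l
    rw [← dsum_freq _ _ (beta_rel h2 h3), ← dsum_time]
  hb2 := by
    intro k n l
    have h1 : ∀ q, ‖dsum L (fun p => coef f2 p * coef f3 p) q‖ ≤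
        dsum L (fun p => ‖coef f2 p‖ * ‖coef f3 p‖) q := by
      intro q
      simp only [dsum]
      refine (norm_sum_le _ _).trans (le_of_eq ?_)
      simp only [norm_mul]
    refine (add_le_add (h1 _) (h1 _)).trans ?_
    rw [← dsum_time]
    simp only [dsum]
    exact Real.sum_mul_le_sqrt_mul_sqrt _ _ _

/-- subtile map -/
def subt (L : ℕ) (pr : Tile × ℕ) : Tile := ⟨pr.1.k - L, 2 ^ L * pr.1.n + pr.2, pr.1.l⟩

theorem subt_div (L : ℕ) {n r : ℕ} (hr : r < 2 ^ L) : (2 ^ L * n + r) / 2 ^ L = n := by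
  rw [Nat.mul_add_div (by positivity), Nat.div_eq_of_lt hr, add_zero]

theorem tl_subt {L : ℕ} {p q : Tile} {r r' : ℕ} (hr : r < 2 ^ L) (hr' : r' < 2 ^ L)
    (h : tl (subt L (p, r)) (subt L (q, r'))) : tl p q := by
  obtain ⟨d, h1, h2, h3⟩ := h
  simp only [subt] at h1 h2 h3
  refine ⟨d, by omega, ?_, h3⟩
  have : (2 ^ L * p.n + r) / 2 ^ d / 2 ^ L = (2 ^ L * q.n + r') / 2 ^ L := by rw [h2]
  rwa [subt_div L hr', Nat.div_div_eq_div_mul, mul_comm (2 ^ d), ← Nat.div_div_eq_div_mul,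
    subt_div L hr] at this

theorem subt_timeI (L : ℕ) (p : Tile) {r : ℕ} (hr : r < 2 ^ L) :
    (subt L (p, r)).timeI ⊆ p.timeI := by
  have h := timeI_sub (p.k - L) (2 ^ L * p.n + r) p.l p.l L
  rw [subt_div L hr, sub_add_cancel] at h
  exact h

theorem Adm.bessel_dsum {f : ℝ → ℂ} {E : Set ℝ} (h : Adm f E) {J : Set ℝ} (hJ : MeasurableSet J)
    (L : ℕ) (𝔭 : Finset Tile)
    (hp : ∀ p ∈ 𝔭, ∀ q ∈ 𝔭, p ≠ q → ¬ tl p q) (hs : ∀ p ∈ 𝔭, p.timeI ⊆ J) :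
    ∑ p ∈ 𝔭, dsum L (fun p => ‖coef f p‖ ^ 2) p ≤ (volume (E ∩ J)).toReal := by
  classical
  have hinj : Set.InjOn (subt L) (𝔭 ×ˢ Finset.range (2 ^ L) : Finset (Tile × ℕ)) := by
    rintro ⟨p, r⟩ hpr ⟨q, r'⟩ hqr e
    simp only [Finset.coe_product, mem_prod, Finset.mem_coe, Finset.mem_range] at hpr hqr
    simp only [subt, Tile.mk.injEq] at e
    have hn := congrArg (· / 2 ^ L) e.2.1
    simp only [subt_div L hpr.2, subt_div L hqr.2] at hn
    have hpq : p = q := Tile.ext' (by omega) hn e.2.2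
    subst hpq
    simp at e; rw [e]
  have hb := h.bessel_loc hJ ((𝔭 ×ˢ Finset.range (2 ^ L)).image (subt L)) (by
    intro P hP Q hQ hne ht
    simp only [Finset.mem_image, Finset.mem_product, Finset.mem_range] at hP hQ
    obtain ⟨⟨p, r⟩, ⟨h1, h2⟩, rfl⟩ := hP
    obtain ⟨⟨q, r'⟩, ⟨g1, g2⟩, rfl⟩ := hQ
    by_cases hpq : p = q
    · subst hpq
      obtain ⟨d, e1, e2, e3⟩ := ht
      simp only [subt] at e1 e2 e3
      have : d = 0 := by omega
      subst this
      apply hne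
      simp at e2; rw [e2]
    · exact hp p h1 q g1 hpq (tl_subt h2 g2 ht)) (by
    intro P hP
    simp only [Finset.mem_image, Finset.mem_product, Finset.mem_range] at hP
    obtain ⟨⟨p, r⟩, ⟨h1, h2⟩, rfl⟩ := hP
    exact (subt_timeI L p h2).trans (hs p h1))
  rw [Finset.sum_image hinj, Finset.sum_product] at hb
  exact hb

theorem dsum_zero_eq (g : Tile → ℝ) : dsum 0 g = g := by
  ext p; simp [dsum]

/-- time interval of a bitile as tile interval -/
theorem Bitile.timeI_h (P : Bitile) (b : ℕ) : (P.h b).timeI = P.timeI := rfl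

theorem bl_timeI {P Q : Bitile} (h : bl P Q) : P.timeI ⊆ Q.timeI := by
  obtain ⟨d, h1, h2, h3⟩ := h
  have := timeI_sub P.k P.n 0 0 d
  rw [h2, ← h1] at this
  exact this

open Classical in
/-- size bound from local measure bounds -/
theorem Adm.sz {f : ℝ → ℂ} {E : Set ℝ} (h : Adm f E) (L : ℕ) (PP : Finset Bitile) {s : ℝ}
    (hs : ∀ P ∈ PP, (volume (E ∩ P.timeI)).toReal ≤ s * (2:ℝ) ^ P.k) :
    Sz (dsum L (fun p => ‖coef f p‖ ^ 2)) PP s where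
  top := by
    intro P hP b hb
    refine le_trans ?_ (hs P hP)
    have := h.bessel_dsum (J := P.timeI) measurableSet_Ico L {P.h b} (by
      intro p hp q hq hne
      simp only [Finset.mem_singleton] at hp hq
      exact absurd (hp.trans hq.symm) hne) (by
      intro p hp
      simp only [Finset.mem_singleton] at hp
      subst hp; exact subset_rfl)
    simpa using this
  lac := by
    intro b c hbc P0 hP0
    refine le_trans ?_ (hs P0 hP0)
    have := h.bessel_dsum (J := P0.timeI) measurableSet_Ico L
      ((PP.filter (fun P => sub b P P0)).image (Bitile.h c)) (by
      intro p hp q hq hne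
      simp only [Finset.mem_image, Finset.mem_filter] at hp hq
      obtain ⟨P, hP, rfl⟩ := hp
      obtain ⟨Q, hQ, rfl⟩ := hq
      exact (selData_sub hbc).inner P Q P0 hP.2 hQ.2 (fun e => hne (by rw [e]))) (by
      intro p hp
      simp only [Finset.mem_image, Finset.mem_filter] at hp
      obtain ⟨P, hP, rfl⟩ := hp
      rw [Bitile.timeI_h]
      exact bl_timeI (sub_bl (by omega) hP.2))
    rwa [Finset.sum_image (fun _ _ _ _ e => h_inj c e)] at this

theorem Adm.bes {f : ℝ → ℂ} {E : Set ℝ} (h : Adm f E) (L : ℕ) :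
    Bes (dsum L (fun p => ‖coef f p‖ ^ 2)) (volume E).toReal := by
  intro 𝔭 hp
  have := h.bessel_dsum MeasurableSet.univ L 𝔭 hp (fun p _ => subset_univ _)
  rwa [inter_univ] at this

end

section

theorem freqI_len (p : Tile) : (2:ℝ) ^ (-p.k) * p.l < (2:ℝ) ^ (-p.k) * (p.l + 1) := by
  have : (0:ℝ) < (2:ℝ) ^ (-p.k) := by positivity
  linarith

theorem timeI_len (p : Tile) : (2:ℝ) ^ p.k * p.n < (2:ℝ) ^ p.k * (p.n + 1) := by
  have : (0:ℝ) < (2:ℝ) ^ p.k := by positivity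
  linarith

theorem dilate_eq (L : ℕ) (q : Tile) : dilate L q.toSet = q.timeI ×ˢ
    Ico ((2:ℝ) ^ (-q.k) * ((2 ^ L * q.l : ℕ) : ℝ)) ((2:ℝ) ^ (-q.k) * ((2 ^ L * (q.l + 1) : ℕ) : ℝ)) := by
  have hL : (0:ℝ) < (2:ℝ) ^ L := by positivity
  ext ⟨x, y⟩
  constructor
  · rintro ⟨⟨a, b⟩, ⟨h1, h2, h3⟩, h⟩
    obtain ⟨rfl, rfl⟩ := Prod.mk.inj h
    simp only at h1 h2 h3
    refine ⟨h1, ?_, ?_⟩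
    · have := mul_le_mul_of_nonneg_left h2 hL.le
      push_cast
      linarith
    · have := mul_lt_mul_of_pos_left h3 hL
      push_cast
      linarith
  · rintro ⟨h1, h2, h3⟩
    push_cast at h2 h3
    simp only at h1 h2 h3
    refine ⟨(x, y / 2 ^ L), ⟨h1, ?_, ?_⟩, ?_⟩
    · rw [le_div_iff₀ hL]; linarith
    · rw [div_lt_iff₀ hL]; linarith
    · refine Prod.ext rfl ?_
      simp only
      field_simp

theorem toSet_sub_iff (p : Tile) (I : Set ℝ) (c d : ℝ) : p.toSet ⊆ I ×ˢ Ico c d ↔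
    p.timeI ⊆ I ∧ c ≤ (2:ℝ) ^ (-p.k) * p.l ∧ (2:ℝ) ^ (-p.k) * (p.l + 1) ≤ d := by
  rw [← Ico_subset_Ico_iff (freqI_len p)]
  have h1 : p.timeI.Nonempty := ⟨_, left_mem_Ico.2 (timeI_len p)⟩
  have h2 : p.freqI.Nonempty := ⟨_, left_mem_Ico.2 (freqI_len p)⟩
  rw [Tile.toSet, prod_subset_prod_iff]
  constructor
  · rintro (h | h | h)
    · exact h
    · exact absurd h h1.ne_empty
    · exact absurd h h2.ne_empty
  · intro h; exact Or.inl h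

theorem timeI_eq {p q : Tile} (h : p.timeI ⊆ q.timeI) (h' : q.timeI ⊆ p.timeI) :
    p.k = q.k ∧ p.n = q.n := by
  rw [Tile.timeI, Tile.timeI] at h h'
  rw [Ico_subset_Ico_iff (timeI_len _)] at h h'
  have e1 : (2:ℝ) ^ p.k * p.n = (2:ℝ) ^ q.k * q.n := le_antisymm h'.1 h.1
  have e2 : (2:ℝ) ^ p.k * (p.n + 1) = (2:ℝ) ^ q.k * (q.n + 1) := le_antisymm h.2 h'.2
  have e3 : (2:ℝ) ^ p.k = (2:ℝ) ^ q.k := by linarith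
  have e4 : p.k = q.k := zpow_right_injective₀ (by norm_num) (by norm_num) e3
  refine ⟨e4, ?_⟩
  rw [e3] at e1
  have := mul_left_cancel₀ (by positivity) e1
  exact_mod_cast this

theorem timeI_k_le {p q : Tile} (h : p.timeI ⊆ q.timeI) : p.k ≤ q.k := by
  rw [Tile.timeI, Tile.timeI, Ico_subset_Ico_iff (timeI_len _)] at h
  have : (2:ℝ) ^ p.k ≤ (2:ℝ) ^ q.k := by linarith [h.1, h.2]
  exact (zpow_le_zpow_iff_right₀ (by norm_num)).1 this

theorem mem_maxTiles (L : ℕ) (q p : Tile) : p ∈ maxTiles (dilate L q.toSet) ↔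
    p.k = q.k ∧ p.n = q.n ∧ 2 ^ L * q.l ≤ p.l ∧ p.l < 2 ^ L * (q.l + 1) := by
  rw [dilate_eq, maxTiles, mem_ofPred_eq]
  have hk : (0:ℝ) < (2:ℝ) ^ (-q.k) := by positivity
  have hfr : ∀ p : Tile, p.k = q.k →
      (((2:ℝ) ^ (-q.k) * ((2 ^ L * q.l : ℕ) : ℝ) ≤ (2:ℝ) ^ (-p.k) * p.l ∧
        (2:ℝ) ^ (-p.k) * (p.l + 1) ≤ (2:ℝ) ^ (-q.k) * ((2 ^ L * (q.l + 1) : ℕ) : ℝ)) ↔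
        (2 ^ L * q.l ≤ p.l ∧ p.l < 2 ^ L * (q.l + 1))) := by
    intro p hp
    rw [hp, mul_le_mul_iff_right₀ hk, mul_le_mul_iff_right₀ hk]
    refine and_congr Nat.cast_le ?_
    rw [← Nat.succ_le_iff, ← Nat.cast_le (α := ℝ)]
    push_cast; rfl
  constructor
  · rintro ⟨h1, h2⟩
    rw [toSet_sub_iff] at h1
    obtain ⟨h1, h3⟩ := h1
    have hkle := timeI_k_le h1
    obtain ⟨d, hd⟩ : ∃ d : ℕ, q.k = p.k + d := ⟨(q.k - p.k).toNat, by omega⟩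
    have hfreq : (2:ℝ) ^ (-q.k) * ((2:ℝ) ^ d) = (2:ℝ) ^ (-p.k) := by
      rw [hd, ← zpow_natCast, ← zpow_add₀ (by norm_num)]; congr 1; ring
    have hone : (1:ℝ) ≤ 2 ^ d := one_le_pow₀ (by norm_num)
    have e1 : (2:ℝ) ^ (-q.k) * ((p.l * 2 ^ d : ℕ) : ℝ) = (2:ℝ) ^ (-p.k) * p.l := by
      rw [← hfreq]; push_cast; ring
    have e2 : (2:ℝ) ^ (-q.k) * (((p.l * 2 ^ d : ℕ) : ℝ) + 1) ≤ (2:ℝ) ^ (-p.k) * (p.l + 1) := by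
      rw [mul_add, e1, mul_add, ← hfreq]
      have := mul_le_mul_of_nonneg_left hone hk.le
      linarith
    have := h2 ⟨q.k, q.n, p.l * 2 ^ d⟩ (by
        rw [toSet_sub_iff]
        refine ⟨subset_rfl, ?_, ?_⟩
        · simp only; rw [e1]; exact h3.1
        · simp only; exact e2.trans h3.2) ⟨h1, Ico_subset_Ico e1.ge e2⟩
    have hkk : p.k = q.k := by rw [← this]
    have hnn : p.n = q.n := by rw [← this]
    exact ⟨hkk, hnn, (hfr p hkk).1 h3⟩
  · rintro ⟨h1, h2, h3⟩
    have ht : p.timeI = q.timeI := by rw [Tile.timeI, Tile.timeI, h1, h2]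
    refine ⟨?_, ?_⟩
    · rw [toSet_sub_iff]
      exact ⟨ht.subset, (hfr p h1).2 h3⟩
    · intro q' hq' hle
      rw [toSet_sub_iff] at hq'
      obtain ⟨g1, g2⟩ := timeI_eq hle.1 (hq'.1.trans ht.symm.subset)
      have hf := hle.2
      rw [Tile.freqI, Tile.freqI, Ico_subset_Ico_iff (freqI_len _), ← g1] at hf
      have hp : (0:ℝ) < (2:ℝ) ^ (-p.k) := by positivity
      have a1 := le_of_mul_le_mul_left hf.1 hp
      have a2 := le_of_mul_le_mul_left hf.2 hp
      have : (p.l:ℝ) = q'.l := by linarith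
      exact Tile.ext' g1.symm g2.symm (by exact_mod_cast this.symm)

theorem piProj_dilate (L : ℕ) (q : Tile) (f : ℝ → ℂ) (x : ℝ) :
    piProj (dilate L q.toSet) f x =
      ∑ m ∈ Finset.range (2 ^ L), projT ⟨q.k, q.n, 2 ^ L * q.l + m⟩ f x := by
  classical
  have e : maxTiles (dilate L q.toSet) =
      ((Finset.range (2 ^ L)).image (fun m => (⟨q.k, q.n, 2 ^ L * q.l + m⟩ : Tile)) : Finset Tile) := by
    ext p
    rw [mem_maxTiles]
    simp only [Finset.coe_image, mem_image, Finset.mem_coe, Finset.mem_range]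
    constructor
    · rintro ⟨h1, h2, h3, h4⟩
      rw [mul_add, mul_one] at h4
      exact ⟨p.l - 2 ^ L * q.l, by omega, Tile.ext' h1.symm h2.symm (by simp only; omega)⟩
    · rintro ⟨m, hm, rfl⟩
      refine ⟨rfl, rfl, by simp, ?_⟩
      rw [mul_add, mul_one]; simpa using hm
  rw [piProj, projSet, e]
  rw [Finset.tsum_subtype' (f := fun p => projT p f x), Finset.sum_image]
  intro a _ b _ h
  simpa using h

theorem sum_freq {A : Type*} [AddCommMonoid A] (L : ℕ) (g : Tile → A)
    (hg : ∀ k n l, g ⟨k - 1, 2 * n, l⟩ + g ⟨k - 1, 2 * n + 1, l⟩ =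
      g ⟨k, n, 2 * l⟩ + g ⟨k, n, 2 * l + 1⟩) (k : ℤ) (n : ℕ) : ∀ l : ℕ,
    ∑ m ∈ Finset.range (2 ^ L), g ⟨k, n, 2 ^ L * l + m⟩ = dsum L g ⟨k, n, l⟩ := by
  induction L with
  | zero => intro l; simp [dsum]
  | succ L ih =>
    intro l
    rw [dsum_freq _ _ hg, ← ih, ← ih, pow_succ, mul_two, Finset.sum_range_add]
    congr 1
    · refine Finset.sum_congr rfl fun r _ => ?_
      congr 2; ring
    · refine Finset.sum_congr rfl fun r _ => ?_
      congr 2; ring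

theorem projT_rel {f : ℝ → ℂ} {E : Set ℝ} (hf : Adm f E) (x : ℝ) (k : ℤ) (n l : ℕ) :
    projT ⟨k - 1, 2 * n, l⟩ f x + projT ⟨k - 1, 2 * n + 1, l⟩ f x =
      projT ⟨k, n, 2 * l⟩ f x + projT ⟨k, n, 2 * l + 1⟩ f x := by
  simp only [projT]
  rw [hf.coef_even, hf.coef_odd, wp_even, wp_odd]
  push_cast
  rw [div_mul_div_comm, div_mul_div_comm, sqrt2_sq]
  ring

theorem piProj_eq {f : ℝ → ℂ} {E : Set ℝ} (hf : Adm f E) (L : ℕ) (q : Tile) (x : ℝ) :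
    piProj (dilate L q.toSet) f x = dsum L (fun p => projT p f x) q := by
  rw [piProj_dilate, sum_freq L (fun p => projT p f x) (projT_rel hf x)]

theorem wp_mul_zero (k : ℤ) {n m : ℕ} (l l' : ℕ) (h : n ≠ m) (x : ℝ) :
    Tile.wp ⟨k, n, l⟩ x * Tile.wp ⟨k, m, l'⟩ x = 0 := by
  by_cases hx : x ∈ Tile.timeI ⟨k, n, l⟩
  · rw [wp_out ⟨k, m, l'⟩ (timeI_disj k _ _ h hx), mul_zero]
  · rw [wp_out ⟨k, n, l⟩ hx, zero_mul]

theorem dsum_mul (f g : ℝ → ℂ) (L : ℕ) (q : Tile) (x : ℝ) :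
    dsum L (fun p => projT p f x) q * dsum L (fun p => projT p g x) q =
      dsum L (fun p => coef f p * coef g p * ((p.wp x * p.wp x : ℝ) : ℂ)) q := by
  simp only [dsum, projT]
  rw [Finset.sum_mul_sum]
  refine Finset.sum_congr rfl fun r hr => ?_
  rw [Finset.sum_eq_single r]
  · push_cast; ring
  · intro s _ hs
    have := wp_mul_zero (q.k - L) q.l q.l (show 2 ^ L * q.n + r ≠ 2 ^ L * q.n + s by omega) x
    rw [mul_mul_mul_comm, ← Complex.ofReal_mul, this]; simp
  · intro h; exact absurd hr h

theorem phid_mul_u (P : Bitile) (x : ℝ) : P.phid x * P.u.wp x =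
    (√((2:ℝ) ^ P.k))⁻¹ * (P.left.timeI.indicator 1 x - P.right.timeI.indicator 1 x) := by
  rw [Bitile.phid, Bitile.d, Bitile.u, wp_even, wp_odd, mul_assoc, div_mul_div_comm,
    Real.mul_self_sqrt (by norm_num)]
  have e : ∀ a b : ℝ, (a + b) * (a - b) = a * a - b * b := fun a b => by ring
  rw [e, wp_sq_eq, wp_sq_eq]
  have hk : (0:ℝ) < (2:ℝ) ^ P.k := by positivity
  have e2 : (2:ℝ) ^ (-(P.k - 1)) = 2 * ((2:ℝ) ^ P.k)⁻¹ := by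
    rw [neg_sub, sub_eq_add_neg, zpow_add₀ (by norm_num), zpow_neg]; simp
  have e3 : √((2:ℝ) ^ P.k) * ((2:ℝ) ^ P.k)⁻¹ = (√((2:ℝ) ^ P.k))⁻¹ := by
    have := Real.mul_self_sqrt hk.le
    have hs : √((2:ℝ) ^ P.k) ≠ 0 := by positivity
    field_simp
    rw [pow_two, this]
  have e4 : ∀ I : Set ℝ, I.indicator (fun _ => (2:ℝ) ^ (-(P.k - 1))) x =
      2 * ((2:ℝ) ^ P.k)⁻¹ * I.indicator 1 x := by
    intro I
    by_cases hx : x ∈ I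
    · rw [indicator_of_mem hx, indicator_of_mem hx, e2]; simp
    · simp [hx]
  rw [e4, e4, ← e3, Bitile.left, Bitile.right]
  ring

/-- integrand associated with a bitile -/
def integrand (L : ℕ) (f1 f2 f3 : ℝ → ℂ) (P : Bitile) (x : ℝ) : ℂ :=
  (P.phid x : ℂ) * projT P.u f1 x * piProj (dilate L P.d.toSet) f2 x *
    piProj (dilate L P.d.toSet) f3 x

theorem dsum_ind (L : ℕ) (g : Tile → ℂ) (q : Tile) (x : ℝ) :
    dsum L (fun p => g p * ((p.wp x * p.wp x : ℝ) : ℂ)) q =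
      (q.timeI.indicator 1 x : ℝ) * dsum L (fun p => g p * ((p.wp x * p.wp x : ℝ) : ℂ)) q := by
  by_cases hx : x ∈ q.timeI
  · rw [indicator_of_mem hx]; simp
  · have : dsum L (fun p => g p * ((p.wp x * p.wp x : ℝ) : ℂ)) q = 0 := by
      refine Finset.sum_eq_zero fun r hr => ?_
      have h := subt_timeI L q (Finset.mem_range.1 hr)
      beta_reduce
      rw [wp_out ⟨q.k - L, 2 ^ L * q.n + r, q.l⟩ (fun h' => hx (h h'))]; simp
    rw [this]; simp

theorem integrand_eq {f1 f2 f3 : ℝ → ℂ} {E2 E3 : Set ℝ} (h2 : Adm f2 E2)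
    (h3 : Adm f3 E3) (L : ℕ) (P : Bitile) (x : ℝ) : integrand (L + 1) f1 f2 f3 P x =
    term (coef f1) (dsum L (fun p => coef f2 p * coef f3 p * ((p.wp x * p.wp x : ℝ) : ℂ))) P := by
  rw [integrand, piProj_eq h2, piProj_eq h3, mul_assoc, dsum_mul]
  set g := fun p => coef f2 p * coef f3 p with hg
  have e1 : (P.phid x : ℂ) * projT P.u f1 x = coef f1 P.u * ((√((2:ℝ) ^ P.k))⁻¹ : ℝ) *
      ((P.left.timeI.indicator 1 x - P.right.timeI.indicator 1 x : ℝ) : ℂ) := by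
    rw [projT, mul_left_comm, ← Complex.ofReal_mul, phid_mul_u]
    push_cast; ring
  rw [e1, Bitile.d, dsum_time, term, Df]
  have e2 := dsum_ind L g ⟨P.k - 1, 2 * P.n, 2 * P.l⟩ x
  have e3 := dsum_ind L g ⟨P.k - 1, 2 * P.n + 1, 2 * P.l⟩ x
  have t2 : Tile.timeI ⟨P.k - 1, 2 * P.n, 2 * P.l⟩ = P.left.timeI := rfl
  have t3 : Tile.timeI ⟨P.k - 1, 2 * P.n + 1, 2 * P.l⟩ = P.right.timeI := rfl
  rw [t2] at e2
  rw [t3] at e3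
  set A := dsum L (fun p => g p * ((p.wp x * p.wp x : ℝ) : ℂ)) ⟨P.k - 1, 2 * P.n, 2 * P.l⟩
  set B := dsum L (fun p => g p * ((p.wp x * p.wp x : ℝ) : ℂ)) ⟨P.k - 1, 2 * P.n + 1, 2 * P.l⟩
  have hu : P.h 1 = P.u := rfl
  rw [hu, mul_assoc (coef f1 P.u * _)]
  congr 1
  by_cases hl : x ∈ P.left.timeI
  · have hr : x ∉ P.right.timeI := timeI_disj _ _ _ (by omega) hl
    rw [indicator_of_mem hl, indicator_of_notMem hr] at *
    have : B = 0 := by rw [e3]; simp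
    rw [this]; simp
  · rw [indicator_of_notMem hl] at *
    have : A = 0 := by rw [e2]; simp
    rw [this]
    by_cases hr : x ∈ P.right.timeI
    · rw [indicator_of_mem hr]; simp
    · rw [indicator_of_notMem hr] at *
      have : B = 0 := by rw [e3]; simp
      rw [this]; simp

end

section

theorem wp2_int (p : Tile) : Integrable (fun x => ((p.wp x * p.wp x : ℝ) : ℂ)) :=
  (wp_int_mul p p).ofReal

theorem wp2_integral (p : Tile) : ∫ x, ((p.wp x * p.wp x : ℝ) : ℂ) = 1 := by
  have h0 : ∫ x, p.wp x * p.wp x = 1 := ip_self p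
  have := integral_ofReal (𝕜 := ℂ) (μ := volume) (f := fun x => p.wp x * p.wp x)
  rw [h0] at this
  exact this.trans (by simp)

theorem dsum_integrable (L : ℕ) (g : Tile → ℂ) (q : Tile) :
    Integrable (fun x => dsum L (fun p => g p * ((p.wp x * p.wp x : ℝ) : ℂ)) q) := by
  simp only [dsum]
  refine integrable_finsetSum _ fun r _ => ?_
  exact (wp2_int _).const_mul _

theorem dsum_integral (L : ℕ) (g : Tile → ℂ) (q : Tile) :
    ∫ x, dsum L (fun p => g p * ((p.wp x * p.wp x : ℝ) : ℂ)) q = dsum L g q := by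
  simp only [dsum]
  rw [integral_finsetSum _ fun r _ => (wp2_int _).const_mul _]
  refine Finset.sum_congr rfl fun r _ => ?_
  rw [integral_const_mul, wp2_integral, mul_one]

theorem dsum_norm_integral (L : ℕ) (g : Tile → ℂ) (q : Tile) :
    ∫ x, ‖dsum L (fun p => g p * ((p.wp x * p.wp x : ℝ) : ℂ)) q‖ ≤ dsum L (fun p => ‖g p‖) q := by
  have hwInt : ∀ p : Tile, Integrable (fun x => ‖g p‖ * (p.wp x * p.wp x)) :=
    fun p => (wp_int_mul p p).const_mul _
  have e : ∫ x, dsum L (fun p => ‖g p‖ * (p.wp x * p.wp x)) q = dsum L (fun p => ‖g p‖) q := by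
    simp only [dsum]
    rw [integral_finsetSum _ fun r _ => hwInt _]
    refine Finset.sum_congr rfl fun r _ => ?_
    have : ∀ p : Tile, ∫ x, p.wp x * p.wp x = 1 := ip_self
    rw [integral_const_mul, this, mul_one]
  rw [← e]
  refine integral_mono (dsum_integrable L g q).norm
    (integrable_finsetSum _ fun r _ => hwInt _) fun x => ?_
  refine (norm_sum_le _ _).trans (Finset.sum_le_sum fun r _ => ?_)
  rw [norm_mul, Complex.norm_real, Real.norm_of_nonneg (mul_self_nonneg _)]

variable {f1 f2 f3 : ℝ → ℂ} {E1 E2 E3 : Set ℝ}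

theorem integrand_int (h2 : Adm f2 E2) (h3 : Adm f3 E3) (L : ℕ) (P : Bitile) :
    Integrable (integrand (L + 1) f1 f2 f3 P) := by
  have : integrand (L + 1) f1 f2 f3 P = fun x => term (coef f1)
      (dsum L (fun p => coef f2 p * coef f3 p * ((p.wp x * p.wp x : ℝ) : ℂ))) P := by
    ext x; exact integrand_eq h2 h3 L P x
  rw [this]
  simp only [term, Df]
  exact ((dsum_integrable L _ _).sub (dsum_integrable L _ _)).const_mul _

theorem integrand_integral (h2 : Adm f2 E2) (h3 : Adm f3 E3) (L : ℕ) (P : Bitile) :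
    ∫ x, integrand (L + 1) f1 f2 f3 P x =
      term (coef f1) (dsum L (fun p => coef f2 p * coef f3 p)) P := by
  simp only [integrand_eq h2 h3]
  simp only [term, Df]
  rw [integral_const_mul, integral_sub (dsum_integrable L _ _) (dsum_integrable L _ _),
    dsum_integral L (fun p => coef f2 p * coef f3 p), dsum_integral L (fun p => coef f2 p * coef f3 p)]

theorem coef_le (h1 : Adm f1 E1) (p : Tile) :
    ‖coef f1 p‖ ≤ √((2:ℝ) ^ (-p.k)) * ∫ x, ‖f1 x‖ := by
  rw [coef, ← integral_const_mul]
  refine (norm_integral_le_integral_norm _).trans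
    (integral_mono (h1.int_wp p).norm (h1.integrable.norm.const_mul _) fun x => ?_)
  beta_reduce
  rw [norm_mul, Complex.norm_real, mul_comm]
  exact mul_le_mul_of_nonneg_right (wp_abs_le p x) (norm_nonneg _)

theorem integrand_norm (h1 : Adm f1 E1) (h2 : Adm f2 E2) (h3 : Adm f3 E3) (L : ℕ) (P : Bitile) :
    ∫ x, ‖integrand (L + 1) f1 f2 f3 P x‖ ≤ (2:ℝ) ^ (-P.k) * ((∫ x, ‖f1 x‖) *
      (dsum (L + 1) (fun p => ‖coef f2 p‖ ^ 2) P.d + dsum (L + 1) (fun p => ‖coef f3 p‖ ^ 2) P.d)) := by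
  simp only [integrand_eq h2 h3, norm_term, Df]
  rw [integral_const_mul]
  set g := fun p => coef f2 p * coef f3 p with hg
  set q1 : Tile := ⟨P.k - 1, 2 * P.n, 2 * P.l⟩
  set q2 : Tile := ⟨P.k - 1, 2 * P.n + 1, 2 * P.l⟩
  have a1 : ∫ x, ‖dsum L (fun p => g p * ((p.wp x * p.wp x : ℝ) : ℂ)) q1 -
      dsum L (fun p => g p * ((p.wp x * p.wp x : ℝ) : ℂ)) q2‖ ≤ dsum (L + 1) (fun p => ‖g p‖) P.d := by
    rw [Bitile.d, dsum_time]
    refine le_trans ?_ (add_le_add (dsum_norm_integral L g q1) (dsum_norm_integral L g q2))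
    rw [← integral_add (dsum_integrable L g q1).norm (dsum_integrable L g q2).norm]
    exact integral_mono ((dsum_integrable L g q1).sub (dsum_integrable L g q2)).norm
      ((dsum_integrable L g q1).norm.add (dsum_integrable L g q2).norm) fun x => norm_sub_le _ _
  have a2 : dsum (L + 1) (fun p => ‖g p‖) P.d ≤
      dsum (L + 1) (fun p => ‖coef f2 p‖ ^ 2) P.d + dsum (L + 1) (fun p => ‖coef f3 p‖ ^ 2) P.d := by
    simp only [dsum]
    rw [← Finset.sum_add_distrib]
    refine Finset.sum_le_sum fun r _ => ?_
    simp only [hg, norm_mul]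
    generalize ‖coef f2 _‖ = s
    generalize ‖coef f3 _‖ = t
    nlinarith [sq_nonneg (s - t), sq_nonneg (s + t), sq_nonneg s, sq_nonneg t]
  have a3 := coef_le h1 (P.h 1)
  have hk : (P.h 1).k = P.k := rfl
  rw [hk] at a3
  have e3 : √((2:ℝ) ^ (-P.k)) * (√((2:ℝ) ^ P.k))⁻¹ = (2:ℝ) ^ (-P.k) := by
    rw [zpow_neg, Real.sqrt_inv, ← mul_inv, Real.mul_self_sqrt (by positivity)]
  have hV : 0 ≤ ∫ x, ‖f1 x‖ := integral_nonneg fun x => norm_nonneg _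
  calc _ ≤ (√((2:ℝ) ^ (-P.k)) * ∫ x, ‖f1 x‖) * (√((2:ℝ) ^ P.k))⁻¹ * _ :=
        mul_le_mul (mul_le_mul_of_nonneg_right a3 (by positivity)) (a1.trans a2)
          (integral_nonneg fun x => norm_nonneg _) (by positivity)
    _ = _ := by rw [mul_right_comm (√((2:ℝ) ^ (-P.k))), e3, mul_assoc]

theorem tl_same {p q : Tile} (hk : p.k = q.k) (h : tl p q) : p = q := by
  obtain ⟨d, h1, h2, h3⟩ := h
  have : d = 0 := by omega
  subst this
  exact Tile.ext' hk (by simpa using h2) (by simpa using h3.symm)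

theorem dsum_scale (h2 : Adm f2 E2) (L : ℕ) (s : Finset Bitile) (k : ℤ) (hs : ∀ P ∈ s, P.k = k) :
    ∑ P ∈ s, dsum L (fun p => ‖coef f2 p‖ ^ 2) P.d ≤ (volume E2).toReal := by
  classical
  have hi : Set.InjOn Bitile.d s := fun P _ Q _ h => h_inj 0 h
  rw [← Finset.sum_image (f := fun p => dsum L (fun p => ‖coef f2 p‖ ^ 2) p) hi]
  refine h2.bes L _ ?_
  intro p hp q hq hne ht
  obtain ⟨P, hP, rfl⟩ := Finset.mem_image.1 hp
  obtain ⟨Q, hQ, rfl⟩ := Finset.mem_image.1 hq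
  exact hne (tl_same ((hs P hP).trans (hs Q hQ).symm) ht)

theorem strip_k {N : ℕ} {P : Bitile} (h : P ∈ stripBitiles N) : 1 - N ≤ P.k := by
  have h' : Ico _ _ ⊆ Ico _ _ := h
  have hp : (0:ℝ) < (2:ℝ) ^ (1 - P.k) := by positivity
  rw [Ico_subset_Ico_iff (by linarith)] at h'
  have hn : (0:ℝ) ≤ P.l := by positivity
  have : (2:ℝ) ^ (1 - P.k) ≤ (2:ℝ) ^ (N:ℤ) := by
    rw [zpow_natCast]; nlinarith [h'.2, mul_nonneg hp.le hn]
  have := (zpow_le_zpow_iff_right₀ (by norm_num : (1:ℝ) < 2)).1 this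
  omega

theorem geo_sum (N : ℕ) (K : Finset ℤ) (hK : ∀ k ∈ K, 1 - (N:ℤ) ≤ k) :
    ∑ k ∈ K, (2:ℝ) ^ (-k) ≤ 2 ^ N := by
  classical
  have hi : Set.InjOn (fun k : ℤ => (k + N - 1).toNat) K := by
    intro a ha b hb h
    have := hK a ha; have := hK b hb
    simp only at h
    omega
  have e : ∑ k ∈ K, (2:ℝ) ^ (-k) = ∑ m ∈ K.image (fun k : ℤ => (k + N - 1).toNat),
      (2:ℝ) ^ N / 2 * (1 / 2) ^ m := by
    rw [Finset.sum_image hi]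
    refine Finset.sum_congr rfl fun k hk => ?_
    have h1 := hK k hk
    obtain ⟨m, hm⟩ : ∃ m : ℕ, k + N - 1 = m := ⟨(k + N - 1).toNat, by omega⟩
    have : k = m - N + 1 := by omega
    simp only [hm, Int.toNat_natCast]
    rw [this, show -((m:ℤ) - N + 1) = N - 1 - m by ring, zpow_sub₀ (by norm_num),
      zpow_sub₀ (by norm_num)]
    simp [div_eq_mul_inv]
  rw [e, ← Finset.mul_sum]
  have := summable_geometric_two.sum_le_tsum (K.image (fun k : ℤ => (k + N - 1).toNat))
    (fun i _ => by positivity)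
  rw [tsum_geometric_two] at this
  have h2 : (0:ℝ) < 2 ^ N := by positivity
  nlinarith

theorem norm_summable (h1 : Adm f1 E1) (h2 : Adm f2 E2) (h3 : Adm f3 E3) (L N : ℕ) :
    Summable (fun P : stripBitiles N => ∫ x, ‖integrand (L + 1) f1 f2 f3 P.1 x‖) := by
  classical
  set V := (∫ x, ‖f1 x‖) * ((volume E2).toReal + (volume E3).toReal) with hVd
  have hV1 : 0 ≤ ∫ x, ‖f1 x‖ := integral_nonneg fun x => norm_nonneg _
  have hV : 0 ≤ V := by positivity
  refine summable_of_sum_le (c := 2 ^ N * V) (fun P => integral_nonneg fun x => norm_nonneg _) ?_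
  intro u
  set s := u.map (Function.Embedding.subtype _) with hs
  have hst : ∀ P ∈ s, P ∈ stripBitiles N := by
    intro P hP
    simp only [hs, Finset.mem_map, Function.Embedding.subtype_apply] at hP
    obtain ⟨Q, _, rfl⟩ := hP
    exact Q.2
  have e : ∑ P ∈ u, ∫ x, ‖integrand (L + 1) f1 f2 f3 P.1 x‖ =
      ∑ P ∈ s, ∫ x, ‖integrand (L + 1) f1 f2 f3 P x‖ := by
    rw [hs, Finset.sum_map]; rfl
  rw [e]
  set D := fun P : Bitile => (∫ x, ‖f1 x‖) * (dsum (L + 1) (fun p => ‖coef f2 p‖ ^ 2) P.d +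
    dsum (L + 1) (fun p => ‖coef f3 p‖ ^ 2) P.d) with hD
  calc _ ≤ ∑ P ∈ s, (2:ℝ) ^ (-P.k) * D P :=
        Finset.sum_le_sum fun P _ => integrand_norm h1 h2 h3 L P
    _ = ∑ k ∈ s.image (fun P => P.k), ∑ P ∈ s.filter (fun P => P.k = k), (2:ℝ) ^ (-P.k) * D P :=
        (Finset.sum_fiberwise_of_maps_to (fun P hP => Finset.mem_image_of_mem _ hP) _).symm
    _ ≤ ∑ k ∈ s.image (fun P => P.k), (2:ℝ) ^ (-k) * V := by
        refine Finset.sum_le_sum fun k _ => ?_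
        have : ∑ P ∈ s.filter (fun P => P.k = k), (2:ℝ) ^ (-P.k) * D P =
            (2:ℝ) ^ (-k) * ∑ P ∈ s.filter (fun P => P.k = k), D P := by
          rw [Finset.mul_sum]
          refine Finset.sum_congr rfl fun P hP => ?_
          rw [(Finset.mem_filter.1 hP).2]
        rw [this]
        refine mul_le_mul_of_nonneg_left ?_ (by positivity)
        rw [hD, hVd, ← Finset.mul_sum, Finset.sum_add_distrib]
        refine mul_le_mul_of_nonneg_left (add_le_add ?_ ?_) hV1
        · exact dsum_scale h2 _ _ k (fun P hP => (Finset.mem_filter.1 hP).2)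
        · exact dsum_scale h3 _ _ k (fun P hP => (Finset.mem_filter.1 hP).2)
    _ ≤ 2 ^ N * V := by
        rw [← Finset.sum_mul]
        refine mul_le_mul_of_nonneg_right (geo_sum N _ ?_) hV
        intro k hk
        obtain ⟨P, hP, rfl⟩ := Finset.mem_image.1 hk
        exact strip_k (hst P hP)

instance : Countable Bitile := by
  have : Function.Injective (fun P : Bitile => (P.k, P.n, P.l)) := by
    intro P Q h
    simp only [Prod.mk.injEq] at h
    exact Bitile.ext' h.1 h.2.1 h.2.2
  exact this.countable

theorem form_hasSum (h1 : Adm f1 E1) (h2 : Adm f2 E2) (h3 : Adm f3 E3) (L N : ℕ) :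
    HasSum (fun P : stripBitiles N => term (coef f1) (dsum L (fun p => coef f2 p * coef f3 p)) P.1)
      (quartileForm (L + 1) N f1 f2 f3) := by
  have := hasSum_integral_of_summable_integral_norm
    (F := fun P : stripBitiles N => integrand (L + 1) f1 f2 f3 P.1)
    (fun P => integrand_int h2 h3 L P.1) (norm_summable h1 h2 h3 L N)
  simp only [integrand_integral h2 h3] at this
  exact this

theorem form_bound (h1 : Adm f1 E1) (h2 : Adm f2 E2) (h3 : Adm f3 E3) (L N : ℕ) {B : ℝ}
    (hB : ∀ s : Finset Bitile, (∀ P ∈ s, P ∈ stripBitiles N) → ∃ t : Finset Bitile, s ⊆ t ∧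
      (∀ P ∈ t, P ∈ stripBitiles N) ∧
      ‖∑ P ∈ t, term (coef f1) (dsum L (fun p => coef f2 p * coef f3 p)) P‖ ≤ B) :
    ‖quartileForm (L + 1) N f1 f2 f3‖ ≤ B := by
  classical
  have h := (form_hasSum h1 h2 h3 L N).norm
  refine le_of_tendsto_of_frequently h ?_
  rw [SummationFilter.unconditional_filter, Filter.frequently_atTop]
  intro u
  set s := u.map (Function.Embedding.subtype _) with hs
  have hst : ∀ P ∈ s, P ∈ stripBitiles N := by
    intro P hP
    simp only [hs, Finset.mem_map, Function.Embedding.subtype_apply] at hP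
    obtain ⟨Q, _, rfl⟩ := hP
    exact Q.2
  obtain ⟨t, h1, h2, h3⟩ := hB s hst
  refine ⟨t.subtype (· ∈ stripBitiles N), ?_, ?_⟩
  · intro P hP
    rw [Finset.mem_subtype]
    apply h1
    rw [hs]
    exact Finset.mem_map_of_mem _ hP
  · rw [Finset.sum_subtype_of_mem _ h2]
    exact h3

end

section

theorem strip_bl {N : ℕ} {P Q : Bitile} (h : bl P Q) (hP : P ∈ stripBitiles N) :
    Q ∈ stripBitiles N := by
  obtain ⟨d, h1, h2, h3⟩ := h
  have h' : Ico _ _ ⊆ Ico _ _ := hP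
  have hp : (0:ℝ) < (2:ℝ) ^ (1 - P.k) := by positivity
  have hq : (0:ℝ) < (2:ℝ) ^ (1 - Q.k) := by positivity
  rw [Ico_subset_Ico_iff (by linarith)] at h'
  show Ico _ _ ⊆ Ico _ _
  refine Ico_subset_Ico (by positivity) ?_
  refine le_trans ?_ h'.2
  have e : (2:ℝ) ^ (1 - P.k) = (2:ℝ) ^ (1 - Q.k) * 2 ^ d := by
    rw [h1, ← zpow_natCast, ← zpow_add₀ (by norm_num)]; congr 1; ring
  rw [e, mul_assoc]
  refine mul_le_mul_of_nonneg_left ?_ hq.le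
  have : Q.l + 1 ≤ 2 ^ d * (P.l + 1) := by
    rw [← h3, mul_add, mul_one]
    have := Nat.lt_mul_div_succ Q.l (show 0 < 2 ^ d by positivity)
    rw [mul_add, mul_one] at this
    exact this
  exact_mod_cast this

theorem hull (N : ℕ) (s : Finset Bitile) (hs : ∀ P ∈ s, P ∈ stripBitiles N) :
    ∃ t : Finset Bitile, s ⊆ t ∧ (∀ P ∈ t, P ∈ stripBitiles N) ∧ Cvx t := by
  classical
  have hfin : {P : Bitile | ∃ P1 ∈ s, ∃ P2 ∈ s, bl P1 P ∧ bl P P2}.Finite := by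
    refine Set.Finite.subset (s.biUnion fun P1 => s.biUnion fun P2 =>
      (Finset.range ((P2.k - P1.k).toNat + 1)).image fun d : ℕ =>
        (⟨P1.k + d, P1.n / 2 ^ d, P2.l / 2 ^ (P2.k - P1.k - d).toNat⟩ : Bitile)).finite_toSet ?_
    rintro P ⟨P1, hP1, P2, hP2, ⟨d, a1, a2, a3⟩, ⟨d', b1, b2, b3⟩⟩
    simp only [Finset.coe_biUnion, mem_iUnion, Finset.coe_image, mem_image, Finset.mem_coe,
      Finset.mem_range]
    refine ⟨P1, hP1, P2, hP2, d, by omega, Bitile.ext' a1.symm a2 ?_⟩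
    rw [← b3]
    simp only
    congr 2
    omega
  refine ⟨hfin.toFinset, ?_, ?_, ?_⟩
  · intro P hP
    rw [Set.Finite.mem_toFinset]
    exact ⟨P, hP, P, hP, bl_refl _, bl_refl _⟩
  · intro P hP
    rw [Set.Finite.mem_toFinset] at hP
    obtain ⟨P1, hP1, P2, hP2, a, b⟩ := hP
    exact strip_bl a (hs _ hP1)
  · intro P1 P P2 h1 h2 a b
    rw [Set.Finite.mem_toFinset] at *
    obtain ⟨Q1, hQ1, _, _, c, _⟩ := h1
    obtain ⟨_, _, Q2, hQ2, _, d⟩ := h2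
    exact ⟨Q1, hQ1, Q2, hQ2, bl_trans c a, bl_trans b d⟩

variable {f1 f2 f3 : ℝ → ℂ} {E1 E2 E3 : Set ℝ}

theorem dsum_eq_zero (L : ℕ) {g : Tile → ℂ} (q : Tile)
    (h : ∀ p : Tile, p.timeI ⊆ q.timeI → g p = 0) : dsum L g q = 0 :=
  Finset.sum_eq_zero fun _ hr => h _ (subt_timeI L q (Finset.mem_range.1 hr))

theorem term_zero (L : ℕ) {Ω : Set ℝ} (hz : (∀ x ∈ Ω, f1 x = 0) ∨ (∀ x ∈ Ω, f2 x = 0) ∨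
    (∀ x ∈ Ω, f3 x = 0)) {P : Bitile} (hP : P.timeI ⊆ Ω) :
    term (coef f1) (dsum L (fun p => coef f2 p * coef f3 p)) P = 0 := by
  have key : (∀ p : Tile, p.timeI ⊆ P.timeI → coef f2 p * coef f3 p = 0) →
      term (coef f1) (dsum L (fun p => coef f2 p * coef f3 p)) P = 0 := by
    intro h
    have s1 : ∀ c < 2, Tile.timeI ⟨P.k - 1, 2 * P.n + c, 2 * P.l⟩ ⊆ P.timeI := by
      intro c hc
      have := timeI_sub (P.k - 1) (2 * P.n + c) (2 * P.l) 0 1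
      have e : (2 * P.n + c) / 2 ^ 1 = P.n := by omega
      rw [e] at this
      simpa [Tile.timeI, Bitile.timeI] using this
    rw [term, Df, dsum_eq_zero L ⟨P.k - 1, 2 * P.n, 2 * P.l⟩ fun p hp => h p (hp.trans (s1 0 (by norm_num))),
      dsum_eq_zero L _ fun p hp => h p (hp.trans (s1 1 (by norm_num)))]
    simp
  rcases hz with h | h | h
  · have : coef f1 (P.h 1) = 0 := coef_zero fun x hx => h x (hP hx)
    rw [term, this]; simp
  · refine key fun p hp => ?_
    rw [coef_zero fun x hx => h x (hP (hp hx)), zero_mul]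
  · refine key fun p hp => ?_
    rw [coef_zero (f := f3) fun x hx => h x (hP (hp hx)), mul_zero]

theorem form_main (h1 : Adm f1 E1) (h2 : Adm f2 E2) (h3 : Adm f3 E3) (L N : ℕ) {Ω : Set ℝ}
    (hz : (∀ x ∈ Ω, f1 x = 0) ∨ (∀ x ∈ Ω, f2 x = 0) ∨ (∀ x ∈ Ω, f3 x = 0))
    {e1 e2 e3 τ : ℝ} (p1 : 0 < e1) (p2 : 0 < e2) (p3 : 0 < e3) (pt : 0 < τ)
    (v1 : (volume E1).toReal ≤ e1) (v2 : (volume E2).toReal ≤ e2) (v3 : (volume E3).toReal ≤ e3)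
    (s1 : ∀ P : Bitile, ¬ P.timeI ⊆ Ω → (volume (E1 ∩ P.timeI)).toReal ≤ e1 * τ * (2:ℝ) ^ P.k)
    (s2 : ∀ P : Bitile, ¬ P.timeI ⊆ Ω → (volume (E2 ∩ P.timeI)).toReal ≤ e2 * τ * (2:ℝ) ^ P.k)
    (s3 : ∀ P : Bitile, ¬ P.timeI ⊆ Ω → (volume (E3 ∩ P.timeI)).toReal ≤ e3 * τ * (2:ℝ) ^ P.k) :
    ‖quartileForm (L + 1) N f1 f2 f3‖ ≤ 576 * (√e1 * √e2 * √e3) * √τ := by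
  classical
  refine form_bound h1 h2 h3 L N fun s hs => ?_
  obtain ⟨t, ht1, ht2, ht3⟩ := hull N s hs
  refine ⟨t, ht1, ht2, ?_⟩
  have e : ∑ P ∈ t, term (coef f1) (dsum L (fun p => coef f2 p * coef f3 p)) P =
      ∑ P ∈ t.filter (fun P => ¬ P.timeI ⊆ Ω),
        term (coef f1) (dsum L (fun p => coef f2 p * coef f3 p)) P := by
    symm
    refine Finset.sum_subset (Finset.filter_subset _ _) fun P hP hn => ?_
    refine term_zero L hz ?_
    by_contra hc
    exact hn (Finset.mem_filter.2 ⟨hP, hc⟩)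
  rw [e]
  have hm : ∀ P ∈ t.filter (fun P => ¬ P.timeI ⊆ Ω), ¬ P.timeI ⊆ Ω :=
    fun P hP => (Finset.mem_filter.1 hP).2
  have hd0 : (fun p => ‖coef f1 p‖ ^ 2) = dsum 0 (fun p => ‖coef f1 p‖ ^ 2) := (dsum_zero_eq _).symm
  refine comb_main (dat_of h2 h3 L) p1 p2 p3 ?_ ?_ ?_ ?_ pt ?_ ?_ ?_
  · intro 𝔭 hp
    rw [hd0]
    exact (h1.bes 0 𝔭 hp).trans v1
  · exact fun 𝔭 hp => (h2.bes (L + 1) 𝔭 hp).trans v2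
  · exact fun 𝔭 hp => (h3.bes (L + 1) 𝔭 hp).trans v3
  · intro P1 P P2 a1 a2 b1 b2
    rw [Finset.mem_filter] at *
    exact ⟨ht3 P1 P P2 a1.1 a2.1 b1 b2, fun hc => a1.2 ((bl_timeI b1).trans hc)⟩
  · rw [hd0]
    exact h1.sz 0 _ fun P hP => s1 P (hm P hP)
  · exact h2.sz (L + 1) _ fun P hP => s2 P (hm P hP)
  · exact h3.sz (L + 1) _ fun P hP => s3 P (hm P hP)

end

section

theorem dy_meas (k : ℤ) (n : ℕ) : MeasurableSet (dyadicI k n) := measurableSet_Ico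

theorem dy_vol (k : ℤ) (n : ℕ) : volume (dyadicI k n) = ENNReal.ofReal ((2:ℝ) ^ k) :=
  timeI_vol ⟨k, n, 0⟩

theorem dy_disj (k : ℤ) {n m : ℕ} (h : n ≠ m) : Disjoint (dyadicI k n) (dyadicI k m) := by
  rw [Set.disjoint_left]
  intro x hx
  exact timeI_disj k 0 0 h hx

theorem dy_lam {k k' : ℤ} (n n' : ℕ) (h : k ≤ k') :
    dyadicI k n ⊆ dyadicI k' n' ∨ Disjoint (dyadicI k n) (dyadicI k' n') := by
  obtain ⟨d, hd⟩ : ∃ d : ℕ, k' = k + d := ⟨(k' - k).toNat, by omega⟩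
  have hs : dyadicI k n ⊆ dyadicI (k + d) (n / 2 ^ d) := timeI_sub k n 0 0 d
  rw [← hd] at hs
  by_cases hn : n / 2 ^ d = n'
  · left; rwa [hn] at hs
  · right; exact Disjoint.mono_left hs (dy_disj k' hn)

/-- exceptional intervals -/
def excS (E : Set ℝ) (lam : ℝ) : Set (ℤ × ℕ) :=
  {i | ENNReal.ofReal lam * volume (dyadicI i.1 i.2) < volume (E ∩ dyadicI i.1 i.2)}

/-- exceptional set -/
def exc (E : Set ℝ) (lam : ℝ) : Set ℝ := ⋃ i ∈ excS E lam, dyadicI i.1 i.2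

theorem exc_meas (E : Set ℝ) (lam : ℝ) : MeasurableSet (exc E lam) :=
  MeasurableSet.biUnion (Set.to_countable _) fun i _ => dy_meas _ _

theorem exc_vol {E : Set ℝ} (hE : MeasurableSet E) (hf : volume E < ∞) {lam : ℝ} (hl : 0 < lam) :
    ENNReal.ofReal lam * volume (exc E lam) ≤ volume E := by
  set S := excS E lam with hS
  set M : Set (ℤ × ℕ) := {i | i ∈ S ∧ ∀ j ∈ S, dyadicI i.1 i.2 ⊆ dyadicI j.1 j.2 → j.1 ≤ i.1} with hM
  obtain ⟨K, hK⟩ := pow_unbounded_of_one_lt ((volume E).toReal / lam) (by norm_num : (1:ℝ) < 2)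
  have hbd : ∀ i ∈ S, i.1 ≤ K := by
    intro i hi
    have hi' : ENNReal.ofReal lam * volume (dyadicI i.1 i.2) < volume (E ∩ dyadicI i.1 i.2) := hi
    have h1 := hi'.trans_le (measure_mono inter_subset_left)
    rw [dy_vol, ← ENNReal.ofReal_mul hl.le, ENNReal.ofReal_lt_iff_lt_toReal (by positivity) hf.ne] at h1
    rw [div_lt_iff₀ hl] at hK
    have h2 : lam * (2:ℝ) ^ i.1 < lam * (2:ℝ) ^ (K:ℤ) := by
      rw [zpow_natCast]; linarith
    have h3 := lt_of_mul_lt_mul_left h2 hl.le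
    exact ((zpow_lt_zpow_iff_right₀ (by norm_num)).1 h3).le
  have hsub : exc E lam ⊆ ⋃ i ∈ M, dyadicI i.1 i.2 := by
    intro x hx
    obtain ⟨i, hi, hxi⟩ := mem_iUnion₂.1 hx
    obtain ⟨k, ⟨⟨j, hj, hxj, hjk⟩, hmax⟩⟩ := Int.exists_greatest_of_bdd
      (P := fun k => ∃ j ∈ S, x ∈ dyadicI j.1 j.2 ∧ j.1 = k)
      ⟨K, by rintro z ⟨j, hj, _, rfl⟩; exact hbd j hj⟩ ⟨i.1, i, hi, hxi, rfl⟩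
    refine mem_iUnion₂.2 ⟨j, ⟨hj, fun j' hj' hs => ?_⟩, hxj⟩
    rw [hjk]
    exact hmax _ ⟨j', hj', hs hxj, rfl⟩
  have hle : ∀ i ∈ M, ∀ j ∈ M, i ≠ j → i.1 ≤ j.1 →
      Disjoint (dyadicI i.1 i.2) (dyadicI j.1 j.2) := by
    intro i hi j hj hne h
    rcases dy_lam i.2 j.2 h with h' | h'
    · have e : i.1 = j.1 := le_antisymm h (hi.2 j hj.1 h')
      rw [e]
      exact dy_disj _ fun h2 => hne (Prod.ext e h2)
    · exact h'
  have hdis : M.PairwiseDisjoint (fun i => dyadicI i.1 i.2) := by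
    intro i hi j hj hne
    rcases le_total i.1 j.1 with h | h
    · exact hle i hi j hj hne h
    · exact (hle j hj i hi hne.symm h).symm
  have hdis' : M.PairwiseDisjoint (fun i => E ∩ dyadicI i.1 i.2) :=
    fun i hi j hj hne => (hdis hi hj hne).mono inter_subset_right inter_subset_right
  calc ENNReal.ofReal lam * volume (exc E lam)
      ≤ ENNReal.ofReal lam * volume (⋃ i ∈ M, dyadicI i.1 i.2) := by gcongr
    _ = ∑' i : M, ENNReal.ofReal lam * volume (dyadicI i.1.1 i.1.2) := by
        rw [measure_biUnion (Set.to_countable _) hdis fun i _ => dy_meas _ _, ENNReal.tsum_mul_left]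
    _ ≤ ∑' i : M, volume (E ∩ dyadicI i.1.1 i.1.2) := ENNReal.tsum_le_tsum fun i => le_of_lt i.2.1
    _ = volume (⋃ i ∈ M, E ∩ dyadicI i.1 i.2) :=
        (measure_biUnion (Set.to_countable _) hdis' fun i _ => hE.inter (dy_meas _ _)).symm
    _ ≤ volume E := measure_mono (iUnion₂_subset fun i _ => inter_subset_left)

theorem exc_empty (E : Set ℝ) {lam : ℝ} (hl : 1 ≤ lam) : exc E lam = ∅ := by
  refine Set.eq_empty_of_forall_notMem fun x hx => ?_
  obtain ⟨i, hi, _⟩ := mem_iUnion₂.1 hx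
  have hi' : ENNReal.ofReal lam * volume (dyadicI i.1 i.2) < volume (E ∩ dyadicI i.1 i.2) := hi
  have h1 := hi'.trans_le (measure_mono inter_subset_right)
  have h2 : (1:ℝ≥0∞) ≤ ENNReal.ofReal lam := by simpa using ENNReal.ofReal_le_ofReal hl
  exact absurd h1 (not_lt.2 (le_mul_of_one_le_left zero_le h2))

theorem exc_size {E : Set ℝ} {lam : ℝ} (hl : 0 ≤ lam) {Ω : Set ℝ} (hΩ : exc E lam ⊆ Ω) {P : Bitile}
    (hP : ¬ P.timeI ⊆ Ω) : (volume (E ∩ P.timeI)).toReal ≤ lam * (2:ℝ) ^ P.k := by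
  have hn : (P.k, P.n) ∉ excS E lam := fun h => hP (le_trans (fun x hx =>
    mem_iUnion₂.2 ⟨(P.k, P.n), h, hx⟩) hΩ)
  have h : volume (E ∩ dyadicI P.k P.n) ≤ ENNReal.ofReal lam * volume (dyadicI P.k P.n) := not_lt.1 hn
  rw [dy_vol, ← ENNReal.ofReal_mul hl] at h
  exact ENNReal.toReal_le_of_le_ofReal (by positivity) h

theorem triv_size (E : Set ℝ) (P : Bitile) : (volume (E ∩ P.timeI)).toReal ≤ (2:ℝ) ^ P.k := by
  have h : volume (E ∩ P.timeI) ≤ ENNReal.ofReal ((2:ℝ) ^ P.k) := by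
    rw [← dy_vol P.k P.n]; exact measure_mono inter_subset_right
  exact ENNReal.toReal_le_of_le_ofReal (by positivity) h

end

section

theorem coef_null {f : ℝ → ℂ} {E : Set ℝ} (h : Adm f E) (h0 : volume E = 0) (p : Tile) :
    coef f p = 0 := by
  refine integral_eq_zero_of_ae ?_
  have : ∀ᵐ x, x ∉ E := measure_eq_zero_iff_ae_notMem.1 h0
  filter_upwards [this] with x hx
  rw [h.out hx]; simp

theorem form_zero {f1 f2 f3 : ℝ → ℂ} {E1 E2 E3 : Set ℝ} (h1 : Adm f1 E1) (h2 : Adm f2 E2)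
    (h3 : Adm f3 E3) (L N : ℕ) (h0 : volume E1 = 0 ∨ volume E2 = 0 ∨ volume E3 = 0) :
    quartileForm (L + 1) N f1 f2 f3 = 0 := by
  have : ‖quartileForm (L + 1) N f1 f2 f3‖ ≤ 0 := by
    refine form_bound h1 h2 h3 L N fun s hs => ⟨s, subset_rfl, hs, ?_⟩
    have : ∀ P, term (coef f1) (dsum L (fun p => coef f2 p * coef f3 p)) P = 0 := by
      intro P
      rcases h0 with h | h | h
      · rw [term, coef_null h1 h]; simp
      · simp [term, Df, coef_null h2 h, dsum]
      · simp [term, Df, coef_null h3 h, dsum]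
    simp [this]
  exact norm_le_zero_iff.1 this

theorem final_arith (α v : Fin 3 → ℝ) (j : Fin 3) (hv : ∀ i, 0 < v i) (hm : ∀ i, v i ≤ v j)
    (ha : ∀ i, α i ≤ 1 / 2) (hs : α 0 + α 1 + α 2 = 1) :
    576 * (√(v 0) * √(v 1) * √(v 2)) * √(4 / v j) ≤
      1152 * v 0 ^ α 0 * v 1 ^ α 1 * v 2 ^ α 2 := by
  have key : ∀ i, √(v i) ≤ v i ^ α i * v j ^ (1 / 2 - α i) := by
    intro i
    have e : √(v i) = v i ^ α i * v i ^ (1 / 2 - α i) := by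
      rw [← Real.rpow_add (hv i), Real.sqrt_eq_rpow]
      congr 1; ring
    rw [e]
    exact mul_le_mul_of_nonneg_left
      (Real.rpow_le_rpow (hv i).le (hm i) (by linarith [ha i])) (Real.rpow_nonneg (hv i).le _)
  have hp : ∀ i, 0 < v i ^ α i := fun i => Real.rpow_pos_of_pos (hv i) _
  have hq : ∀ i, 0 < v j ^ (1 / 2 - α i) := fun i => Real.rpow_pos_of_pos (hv j) _
  have h1 : √(v 0) * √(v 1) * √(v 2) ≤ (v 0 ^ α 0 * v 1 ^ α 1 * v 2 ^ α 2) * √(v j) := by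
    have e : v j ^ (1 / 2 - α 0) * v j ^ (1 / 2 - α 1) * v j ^ (1 / 2 - α 2) = √(v j) := by
      rw [← Real.rpow_add (hv j), ← Real.rpow_add (hv j), Real.sqrt_eq_rpow]
      congr 1; linarith
    rw [← e]
    calc _ ≤ (v 0 ^ α 0 * v j ^ (1 / 2 - α 0)) * (v 1 ^ α 1 * v j ^ (1 / 2 - α 1)) *
        (v 2 ^ α 2 * v j ^ (1 / 2 - α 2)) :=
          mul_le_mul (mul_le_mul (key 0) (key 1) (Real.sqrt_nonneg _)
            (mul_nonneg (hp 0).le (hq 0).le)) (key 2) (Real.sqrt_nonneg _)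
            (mul_nonneg (mul_nonneg (hp 0).le (hq 0).le) (mul_nonneg (hp 1).le (hq 1).le))
      _ = _ := by ring
  have h2 : √(4 / v j) = 2 / √(v j) := by
    rw [Real.sqrt_div (by norm_num), show (4:ℝ) = 2 ^ 2 by norm_num, Real.sqrt_sq (by norm_num)]
  have h3 : 0 < √(v j) := Real.sqrt_pos.2 (hv j)
  rw [h2]
  calc _ ≤ 576 * ((v 0 ^ α 0 * v 1 ^ α 1 * v 2 ^ α 2) * √(v j)) * (2 / √(v j)) := by gcongr
    _ = _ := by field_simp; ring

theorem major (E : Fin 3 → Set ℝ) (hE : ∀ i, MeasurableSet (E i)) (hf : ∀ i, volume (E i) < ∞)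
    (j : Fin 3) (hv : ∀ i, 0 < (volume (E i)).toReal) :
    ∃ Ω : Set ℝ, MeasurableSet Ω ∧ volume (E j) / 2 ≤ volume (E j \ Ω) ∧
      ((∀ i i', volume (E i) ≤ 4 * volume (E i')) → Ω = ∅) ∧
      ∀ P : Bitile, ¬ P.timeI ⊆ Ω → ∀ i, i ≠ j → (volume (E i ∩ P.timeI)).toReal ≤
        (volume (E i)).toReal * (4 / (volume (E j)).toReal) * (2:ℝ) ^ P.k := by
  classical
  set v := fun i => (volume (E i)).toReal with hvd
  have hv' : ∀ i, 0 < v i := hv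
  have hvo : ∀ i, volume (E i) = ENNReal.ofReal (v i) := fun i => (ENNReal.ofReal_toReal (hf i).ne).symm
  have hl : ∀ i, 0 < v i * (4 / v j) := fun i => mul_pos (hv' i) (div_pos (by norm_num) (hv' j))
  refine ⟨⋃ i ∈ Finset.univ.erase j, exc (E i) (v i * (4 / v j)), ?_, ?_, ?_, ?_⟩
  · exact Finset.measurableSet_biUnion _ fun i _ => exc_meas _ _
  · have h1 : ∀ i, volume (exc (E i) (v i * (4 / v j))) ≤ volume (E j) / 4 := by
      intro i
      have := exc_vol (hE i) (hf i) (hl i)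
      rw [hvo i, mul_comm, ← ENNReal.le_div_iff_mul_le (Or.inl (by simpa using hl i))
        (Or.inl ENNReal.ofReal_ne_top), ← ENNReal.ofReal_div_of_pos (hl i)] at this
      refine this.trans (le_of_eq ?_)
      rw [hvo j, show (4:ℝ≥0∞) = ENNReal.ofReal 4 by simp, ← ENNReal.ofReal_div_of_pos (by norm_num)]
      congr 1
      have := (hv' i).ne'; have := (hv' j).ne'
      field_simp
    have h2 : volume (⋃ i ∈ Finset.univ.erase j, exc (E i) (v i * (4 / v j))) ≤ volume (E j) / 2 := by
      refine (measure_biUnion_finset_le _ _).trans ?_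
      refine (Finset.sum_le_card_nsmul _ _ _ fun i _ => h1 i).trans (le_of_eq ?_)
      rw [Finset.card_erase_of_mem (Finset.mem_univ _), Finset.card_univ, Fintype.card_fin,
        hvo j, show (4:ℝ≥0∞) = ENNReal.ofReal 4 by simp, ← ENNReal.ofReal_div_of_pos (by norm_num),
        show (2:ℝ≥0∞) = ENNReal.ofReal 2 by simp, ← ENNReal.ofReal_div_of_pos (by norm_num),
        ← ENNReal.ofReal_nsmul]
      congr 1
      norm_num
      ring
    refine le_trans ?_ (le_measure_sdiff)
    calc volume (E j) / 2 = volume (E j) - volume (E j) / 2 := (ENNReal.sub_half (hf j).ne).symm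
      _ ≤ _ := tsub_le_tsub_left h2 _
  · intro h4
    refine Set.eq_empty_of_forall_notMem fun x hx => ?_
    obtain ⟨i, _, hi⟩ := mem_iUnion₂.1 hx
    have h5 := h4 j i
    rw [hvo i, hvo j, show (4:ℝ≥0∞) = ENNReal.ofReal 4 by simp, ← ENNReal.ofReal_mul (by norm_num),
      ENNReal.ofReal_le_ofReal_iff (by linarith [hv' i])] at h5
    rw [exc_empty] at hi
    · exact hi
    · rw [mul_div_assoc', le_div_iff₀ (hv' j)]; linarith
  · intro P hP i hi
    refine exc_size (hl i).le ?_ hP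
    exact subset_biUnion_of_mem (u := fun i => exc (E i) (v i * (4 / v j)))
      (Finset.mem_coe.2 (Finset.mem_erase.2 ⟨hi, Finset.mem_univ _⟩))

end

/-- Proposition (Triangle `c`). -/
theorem triangle_c :
    ∀ α : Fin 3 → ℝ, 0 ≤ α 0 → α 0 ≤ 1/2 → 0 ≤ α 1 → α 1 < 1/2 → 0 ≤ α 2 → α 2 < 1/2 →
      α 0 + α 1 + α 2 = 1 →
    ∃ C : ℝ≥0, ∀ E : Fin 3 → Set ℝ,
      (∀ i, MeasurableSet (E i)) → (∀ i, E i ⊆ Ici 0) → (∀ i, volume (E i) < ∞) →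
      ∀ j : Fin 3, (∀ i, volume (E i) ≤ volume (E j)) →
      ∃ E' : Set ℝ, MeasurableSet E' ∧ E' ⊆ E j ∧ volume (E j) / 2 ≤ volume E' ∧
        ((∀ i i', volume (E i) ≤ 4 * volume (E i')) → E' = E j) ∧
        ∀ (L N : ℕ), 2 ≤ L → ∀ f : Fin 3 → ℝ → ℂ, (∀ i, Measurable (f i)) →
          (∀ i, i ≠ j → ∀ x, ‖f i x‖ ≤ (E i).indicator 1 x) →
          (∀ x, ‖f j x‖ ≤ E'.indicator 1 x) →
          (‖quartileForm L N (f 0) (f 1) (f 2)‖₊ : ℝ≥0∞) ≤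
            C * volume (E 0) ^ (α 0) * volume (E 1) ^ (α 1) * volume (E 2) ^ (α 2) := by
  classical
  intro α _ a0 _ a1 _ a2 hs
  refine ⟨1152, ?_⟩
  intro E hE _ hfin j hmax
  by_cases h0 : ∃ i, volume (E i) = 0
  · refine ⟨E j, hE j, subset_rfl, ENNReal.half_le_self, fun _ => rfl, ?_⟩
    intro L N hL f hf hfi hfj
    obtain ⟨L, rfl⟩ : ∃ L', L = L' + 1 := ⟨L - 1, by omega⟩
    have hA : ∀ i, Adm (f i) (E i) := by
      intro i
      refine ⟨hf i, hE i, hfin i, ?_⟩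
      by_cases hij : i = j
      · subst hij; exact hfj
      · exact hfi i hij
    have hz : volume (E 0) = 0 ∨ volume (E 1) = 0 ∨ volume (E 2) = 0 := by
      obtain ⟨i, hi⟩ := h0
      fin_cases i
      · exact Or.inl hi
      · exact Or.inr (Or.inl hi)
      · exact Or.inr (Or.inr hi)
    rw [form_zero (hA 0) (hA 1) (hA 2) L N hz]
    simp
  · push Not at h0
    have hv : ∀ i, 0 < (volume (E i)).toReal := fun i => ENNReal.toReal_pos (h0 i) (hfin i).ne
    obtain ⟨Ω, hΩm, hΩv, hΩe, hΩs⟩ := major E hE hfin j hv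
    refine ⟨E j \ Ω, (hE j).diff hΩm, sdiff_subset, hΩv, ?_, ?_⟩
    · intro h; rw [hΩe h, sdiff_empty]
    intro L N hL f hf hfi hfj
    obtain ⟨L, rfl⟩ : ∃ L', L = L' + 1 := ⟨L - 1, by omega⟩
    set F : Fin 3 → Set ℝ := fun i => if i = j then E j \ Ω else E i with hF
    have hA : ∀ i, Adm (f i) (F i) := by
      intro i
      by_cases hij : i = j
      · subst hij
        simp only [hF, if_pos]
        exact ⟨hf i, (hE i).diff hΩm, (measure_mono sdiff_subset).trans_lt (hfin i), hfj⟩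
      · simp only [hF, if_neg hij]
        exact ⟨hf i, hE i, hfin i, hfi i hij⟩
    have hFE : ∀ i, F i ⊆ E i := by
      intro i
      by_cases hij : i = j
      · subst hij
        simp only [hF, if_pos]
        exact sdiff_subset
      · simp only [hF, if_neg hij]
        exact subset_rfl
    have hFv : ∀ i, (volume (F i)).toReal ≤ (volume (E i)).toReal := fun i =>
      ENNReal.toReal_mono (hfin i).ne (measure_mono (hFE i))
    have hsz : ∀ i, ∀ P : Bitile, ¬ P.timeI ⊆ Ω → (volume (F i ∩ P.timeI)).toReal ≤
        (volume (E i)).toReal * (4 / (volume (E j)).toReal) * (2:ℝ) ^ P.k := by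
      intro i P hP
      by_cases hij : i = j
      · subst hij
        refine (triv_size _ P).trans ?_
        rw [mul_div_cancel₀ _ (hv i).ne']
        have : (0:ℝ) < (2:ℝ) ^ P.k := by positivity
        linarith
      · simp only [hF, if_neg hij]
        exact hΩs P hP i hij
    have hfz : ∀ x ∈ Ω, f j x = 0 := by
      intro x hx
      have := (hA j).out (x := x)
      simp only [hF, if_pos] at this
      exact this fun h => h.2 hx
    have hz : (∀ x ∈ Ω, f 0 x = 0) ∨ (∀ x ∈ Ω, f 1 x = 0) ∨ (∀ x ∈ Ω, f 2 x = 0) := by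
      clear_value F
      fin_cases j
      · exact Or.inl hfz
      · exact Or.inr (Or.inl hfz)
      · exact Or.inr (Or.inr hfz)
    have hmain := form_main (hA 0) (hA 1) (hA 2) L N hz (hv 0) (hv 1) (hv 2)
      (div_pos (by norm_num) (hv j)) (hFv 0) (hFv 1) (hFv 2) (hsz 0) (hsz 1) (hsz 2)
    have hα : ∀ i, α i ≤ 1 / 2 := by
      intro i
      fin_cases i
      · exact a0
      · exact a1.le
      · exact a2.le
    have hfa := final_arith α (fun i => (volume (E i)).toReal) j hv
      (fun i => ENNReal.toReal_mono (hfin j).ne (hmax i)) hα hs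
    have hb := hmain.trans hfa
    have hpw : ∀ i, volume (E i) ^ α i = ENNReal.ofReal ((volume (E i)).toReal ^ α i) := by
      intro i
      rw [← ENNReal.ofReal_rpow_of_pos (hv i), ENNReal.ofReal_toReal (hfin i).ne]
    have hn : ∀ i, 0 ≤ (volume (E i)).toReal ^ α i := fun i => Real.rpow_nonneg (hv i).le _
    rw [hpw, hpw, hpw, show ((1152 : ℝ≥0) : ℝ≥0∞) = ENNReal.ofReal 1152 by simp,
      ← ENNReal.ofReal_mul (by norm_num), ← ENNReal.ofReal_mul (mul_nonneg (by norm_num) (hn 0)),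
      ← ENNReal.ofReal_mul (mul_nonneg (mul_nonneg (by norm_num) (hn 0)) (hn 1))]
    rw [← enorm_eq_nnnorm, ← ofReal_norm]
    exact ENNReal.ofReal_le_ofReal hb

end Quartile
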